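/- Suppose 0 < 1/n ≪ λ ≪ ε ≤ 1, k ∈ ℕ∖{1}, and R = (ε/3, a, d_{a,k}) is a regularity instance. Suppose P = P(k−1, a) is a (1/a_1, ε, a, λ)-equitable family of partitions and is an (ε, d_{a,k})-partition of an n-vertex k-graph H^(k). Then there exists a family of partitions Q = Q(k−1, a) which is an (ε + λ^{1/10}, a, d_{a,k})-equitable partition of H^(k). -/

import Mathlib

namespace HypReg

open Finset

attribute [local instance 10] Classical.propDecidable

noncomputable section

variable {V : Type*} [DecidableEq V]

/-- Representation of a 1-graph: the set of singletons of `U`. -/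
def sing (U : Finset V) : Finset (Finset V) :=
  U.image fun v => ({v} : Finset V)

/-- `Kset W j i B`: the i-element subsets of `W` all of whose j-element subsets lie in `B`. -/
def Kset (W : Finset V) (j i : ℕ) (B : Finset (Finset V)) : Finset (Finset V) :=
  (W.powersetCard i).filter fun S => ∀ T ∈ S.powersetCard j, T ∈ B

/-- Clique operator which, at level 1, uses the ambient family `cr` of crossing i-sets. -/
def KsetC (W : Finset V) (cr : Finset (Finset V)) (j i : ℕ) (B : Finset (Finset V)) :
    Finset (Finset V) :=
  if j = 1 then cr.filter fun S => ∀ v ∈ S, ({v} : Finset V) ∈ B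
  else Kset W j i B

/-- `A` (a (j+1)-graph) is (ε,d)-regular with respect to the j-graph `B` (plain clique sets). -/
def RegPair (W : Finset V) (j : ℕ) (ε d : ℝ) (A B : Finset (Finset V)) : Prop :=
  ∀ Q ⊆ B, ε * ((Kset W j (j+1) B).card : ℝ) ≤ ((Kset W j (j+1) Q).card : ℝ) →
    |((A ∩ Kset W j (j+1) Q).card : ℝ) - d * ((Kset W j (j+1) Q).card : ℝ)|
      ≤ ε * ((Kset W j (j+1) Q).card : ℝ)

/-- (ε,d)-regularity with crossing-aware clique sets. -/
def RegPairC (W : Finset V) (cr : Finset (Finset V)) (j : ℕ) (ε d : ℝ)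
    (A B : Finset (Finset V)) : Prop :=
  ∀ Q ⊆ B, ε * ((KsetC W cr j (j+1) B).card : ℝ) ≤ ((KsetC W cr j (j+1) Q).card : ℝ) →
    |((A ∩ KsetC W cr j (j+1) Q).card : ℝ) - d * ((KsetC W cr j (j+1) Q).card : ℝ)|
      ≤ ε * ((KsetC W cr j (j+1) Q).card : ℝ)

/-- Relative density `d(A | B)` of the (j+1)-graph `A` w.r.t. the j-graph `B`. -/
def dens (W : Finset V) (cr : Finset (Finset V)) (j : ℕ) (A B : Finset (Finset V)) : ℝ :=
  if (KsetC W cr j (j+1) B).card = 0 then 0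
  else ((A ∩ KsetC W cr j (j+1) B).card : ℝ) / ((KsetC W cr j (j+1) B).card : ℝ)

/-- `H` is a k-graph on the vertex set `W`. -/
def IsKGraph (W : Finset V) (k : ℕ) (H : Finset (Finset V)) : Prop :=
  ∀ e ∈ H, e ⊆ W ∧ e.card = k

/-- symmetric difference of two hypergraphs -/
def sd (A B : Finset (Finset V)) : Finset (Finset V) := (A \ B) ∪ (B \ A)

/-- A (candidate) family of partitions: the ground set, the class of each vertex and,
for each level `j ≥ 2`, the class of each crossing j-set. -/
structure PartFam (V : Type*) [DecidableEq V] where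
  gnd : Finset V
  vClass : V → Finset V
  cls : ℕ → Finset V → Finset (Finset V)

namespace PartFam

variable (F : PartFam V)

/-- crossing i-sets -/
def cross (i : ℕ) : Finset (Finset V) :=
  (F.gnd.powersetCard i).filter fun S =>
    ∀ u ∈ S, ∀ v ∈ S, u ≠ v → F.vClass u ≠ F.vClass v

/-- the level-j polyad of a vertex set `J` -/
def polyad (j : ℕ) (J : Finset V) : Finset (Finset V) :=
  if j = 1 then sing (J.sup F.vClass) else (J.powersetCard j).sup (F.cls j)

/-- the clique set `K_j(P̂^{(j-1)}(J))` of the (j−1)-polyad of a crossing j-set `J` -/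
def polyCliques (j : ℕ) (J : Finset V) : Finset (Finset V) :=
  KsetC F.gnd (F.cross j) (j-1) j (F.polyad (j-1) J)

/-- `F` is a family of partitions `P(k−1, a)`. -/
def IsFamily (k : ℕ) (a : ℕ → ℕ) : Prop :=
  (∀ v ∈ F.gnd, v ∈ F.vClass v) ∧
  (∀ v ∈ F.gnd, F.vClass v ⊆ F.gnd) ∧
  (∀ u ∈ F.gnd, ∀ v ∈ F.gnd, u ∈ F.vClass v → F.vClass u = F.vClass v) ∧
  (F.gnd.image F.vClass).card = a 1 ∧ k ≤ a 1 ∧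
  ∀ j, 2 ≤ j → j ≤ k - 1 →
    (∀ J ∈ F.cross j, J ∈ F.cls j J) ∧
    (∀ J ∈ F.cross j, ∀ I ∈ F.cls j J, F.cls j I = F.cls j J) ∧
    (∀ J ∈ F.cross j, F.cls j J ⊆ F.polyCliques j J) ∧
    (∀ J ∈ F.cross j, F.polyCliques j J ⊆ F.cross j) ∧
    (∀ J ∈ F.cross j, ((F.polyCliques j J).image (F.cls j)).card = a j)

/-- the regularity condition in the definition of an equitable family of partitions:
all polyad complexes of crossing k-sets are (ε, (1/a_2, …, 1/a_{k−1}))-regular. -/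
def PolyadReg (k : ℕ) (a : ℕ → ℕ) (ε : ℝ) : Prop :=
  ∀ K ∈ F.cross k, ∀ j, 2 ≤ j → j ≤ k - 1 → ∀ J ∈ K.powersetCard j,
    RegPairC F.gnd (F.cross j) (j-1) ε (1 / (a j : ℝ)) (F.polyad j K) (F.polyad (j-1) J)

/-- `(η, ε, a, λ)`-equitable family of partitions -/
def IsEquitable (k : ℕ) (a : ℕ → ℕ) (η ε lam : ℝ) : Prop :=
  1 ≤ η * (a 1 : ℝ) ∧
  (∀ v ∈ F.gnd, |((F.vClass v).card : ℝ) - (F.gnd.card : ℝ) / (a 1 : ℝ)|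
      ≤ lam * (F.gnd.card : ℝ) / (a 1 : ℝ)) ∧
  F.PolyadReg k a ε

/-- `(η, ε, a)`-equitable family of partitions (classes of size ⌊n/a₁⌋ or ⌊n/a₁⌋+1) -/
def IsEquitableE (k : ℕ) (a : ℕ → ℕ) (η ε : ℝ) : Prop :=
  1 ≤ η * (a 1 : ℝ) ∧
  (∀ v ∈ F.gnd, (F.vClass v).card = F.gnd.card / a 1 ∨
      (F.vClass v).card = F.gnd.card / a 1 + 1) ∧
  F.PolyadReg k a ε

/-- `G` is perfectly ε-regular with respect to `F`. -/
def PerfectlyRegular (k : ℕ) (ε : ℝ) (G : Finset (Finset V)) : Prop :=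
  ∀ K ∈ F.cross k, ∃ d : ℝ, 0 ≤ d ∧
    RegPairC F.gnd (F.cross k) (k-1) ε d G (F.polyad (k-1) K)

end PartFam

/-- `a` is a T-bounded vector of length k−1. -/
def BoundedVec (k T : ℕ) (a : ℕ → ℕ) : Prop := ∀ j, 1 ≤ j → j ≤ k - 1 → a j ≤ T

/-- level-j refinement `F^{(j)} ≺ P^{(j)}` between two families of partitions -/
def RefinesAt (F P : PartFam V) (j : ℕ) : Prop :=
  if j = 1 then ∀ v ∈ F.gnd, F.vClass v ⊆ P.vClass v
  else ∀ I ∈ F.cross j,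
    (∃ J ∈ P.cross j, F.cls j I ⊆ P.cls j J) ∨ ∀ S ∈ F.cls j I, S ∉ P.cross j

/-- level-j approximate refinement `F^{(j)} ≺_ν P^{(j)}` -/
def RefinesApproxAt (F P : PartFam V) (j : ℕ) (ν : ℝ) : Prop :=
  if j = 1 then
    ∃ f : Finset V → Finset V,
      (∀ v ∈ F.gnd, f (F.vClass v) ∈ F.gnd.image P.vClass) ∧
      ∑ C ∈ F.gnd.image F.vClass, ((C \ f C).card : ℝ) ≤ ν * (F.gnd.card : ℝ)
  else
    ∃ f : Finset (Finset V) → Finset (Finset V),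
      (∀ I ∈ F.cross j,
        f (F.cls j I) ∈ ((P.cross j).image (P.cls j)) ∪ {F.cross j \ P.cross j}) ∧
      ∑ C ∈ (F.cross j).image (F.cls j), ((C \ f C).card : ℝ) ≤ ν * ((F.cross j).card : ℝ)

/-- The address space: a base set (of class indices) together with a labelling of its subsets. -/
abbrev Addr := Finset ℕ × (Finset ℕ → ℕ)

/-- `x` is an element of the address space `Â(l, j, a)`. -/
def IsAddress (l j : ℕ) (a : ℕ → ℕ) (x : Addr) : Prop :=
  x.1.card = l ∧ (∀ i ∈ x.1, 1 ≤ i ∧ i ≤ a 1) ∧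
  (∀ L : Finset ℕ, L ⊆ x.1 → 2 ≤ L.card → L.card ≤ j → 1 ≤ x.2 L ∧ x.2 L ≤ a L.card) ∧
  (∀ L : Finset ℕ, ¬(L ⊆ x.1 ∧ 2 ≤ L.card ∧ L.card ≤ j) → x.2 L = 0)

/-- restriction `ŷ ≤ x̂` of an address to the base `B`, keeping levels up to `j`. -/
def restrictA (x : Addr) (j : ℕ) (B : Finset ℕ) : Addr :=
  (B, fun L => if L ⊆ B ∧ 2 ≤ L.card ∧ L.card ≤ j then x.2 L else 0)

/-- `d` is a density function of `Â(k, k−1, a)`. -/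
def DensityFun (k : ℕ) (a : ℕ → ℕ) (d : Addr → ℝ) : Prop :=
  ∀ x : Addr, IsAddress k (k-1) a x → 0 ≤ d x ∧ d x ≤ 1

/-- A family of partitions together with an `a`-labelling. -/
structure LabFam (V : Type*) [DecidableEq V] extends PartFam V where
  vIdx : V → ℕ
  lbl : ℕ → Finset V → ℕ

namespace LabFam

variable (F : LabFam V)

/-- `F` is a family of partitions with a legitimate `a`-labelling. -/
def IsLabeled (k : ℕ) (a : ℕ → ℕ) : Prop :=
  F.toPartFam.IsFamily k a ∧
  (∀ v ∈ F.gnd, 1 ≤ F.vIdx v ∧ F.vIdx v ≤ a 1) ∧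
  (∀ u ∈ F.gnd, ∀ v ∈ F.gnd, (F.vIdx u = F.vIdx v ↔ F.vClass u = F.vClass v)) ∧
  ∀ j, 2 ≤ j → j ≤ k - 1 →
    (∀ I ∈ F.toPartFam.cross j, 1 ≤ F.lbl j I ∧ F.lbl j I ≤ a j) ∧
    (∀ I ∈ F.toPartFam.cross j, ∀ I' ∈ F.cls j I, F.lbl j I' = F.lbl j I) ∧
    (∀ I ∈ F.toPartFam.cross j, ∀ I' ∈ F.toPartFam.cross j,
      F.toPartFam.polyad (j-1) I = F.toPartFam.polyad (j-1) I' →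
      F.lbl j I = F.lbl j I' → F.cls j I = F.cls j I')

/-- the address `x̂(L)` (up to level j) of a crossing set `L` -/
def addrOf (j : ℕ) (L : Finset V) : Addr :=
  (L.image F.vIdx,
   fun M => if M ⊆ L.image F.vIdx ∧ 2 ≤ M.card ∧ M.card ≤ j
     then F.lbl M.card (L.filter fun v => F.vIdx v ∈ M) else 0)

/-- the part `P^{(j)}(x̂, b)` -/
def partAt (j : ℕ) (x : Addr) (b : ℕ) : Finset (Finset V) :=
  if j ≤ 1 then (if x.1 = {b} then sing (F.gnd.filter fun v => F.vIdx v = b) else ∅)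
  else (F.toPartFam.cross j).filter fun I => F.addrOf (j-1) I = x ∧ F.lbl j I = b

/-- the polyad `P̂^{(j)}(x̂)` -/
def polyAt (j : ℕ) (x : Addr) : Finset (Finset V) :=
  if j = 1 then sing (F.gnd.filter fun v => F.vIdx v ∈ x.1)
  else (x.1.powersetCard j).sup fun B => F.partAt j (restrictA x (j-1) B) (x.2 B)

/-- `F` is an `(ε, d)`-partition of `H`. -/
def IsDensPartition (k : ℕ) (a : ℕ → ℕ) (ε : ℝ) (d : Addr → ℝ)
    (H : Finset (Finset V)) : Prop :=
  ∀ x : Addr, IsAddress k (k-1) a x →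
    RegPairC F.gnd (F.toPartFam.cross k) (k-1) ε (d x) H (F.polyAt (k-1) x)

/-- `F` is an `(ε, a, d)`-equitable partition of `H`. -/
def IsEquitPartition (k : ℕ) (a : ℕ → ℕ) (ε : ℝ) (d : Addr → ℝ)
    (H : Finset (Finset V)) : Prop :=
  F.IsLabeled k a ∧ F.toPartFam.IsEquitableE k a (1 / (a 1 : ℝ)) ε ∧
  F.IsDensPartition k a ε d H

end LabFam

/-- An ℓ-partite complex: vertex classes and, for each level, a partite graph. -/
structure Cx (V : Type*) [DecidableEq V] (l : ℕ) where
  C : Fin l → Finset V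
  G : ℕ → Finset (Finset V)

namespace Cx

variable {l : ℕ} (X : Cx V l)

def gnd : Finset V := Finset.univ.sup X.C

/-- crossing i-sets with respect to the classes of `X` -/
def cross (i : ℕ) : Finset (Finset V) :=
  (X.gnd.powersetCard i).filter fun S => ∀ t : Fin l, (S ∩ X.C t).card ≤ 1

/-- restriction of the level-j graph to the classes indexed by `L` -/
def restr (j : ℕ) (L : Finset (Fin l)) : Finset (Finset V) :=
  if j = 1 then sing (L.sup X.C) else (X.G j).filter fun e => e ⊆ L.sup X.C

/-- `X` is a complex with levels up to `k`. -/
def IsComplex (k : ℕ) : Prop :=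
  (∀ s t : Fin l, s ≠ t → Disjoint (X.C s) (X.C t)) ∧
  (∀ j, 2 ≤ j → j ≤ k → X.G j ⊆ X.cross j) ∧
  (∀ j, 3 ≤ j → j ≤ k → X.G j ⊆ Kset X.gnd (j-1) j (X.G (j-1)))

/-- `X` is an (ε, (d_2, …, d_k))-regular complex. -/
def IsRegular (k : ℕ) (ε : ℝ) (d : ℕ → ℝ) : Prop :=
  ∀ j, 2 ≤ j → j ≤ k → ∀ L ∈ (Finset.univ : Finset (Fin l)).powersetCard j,
    RegPairC X.gnd (X.cross j) (j-1) ε (d j) (X.G j) (X.restr (j-1) L)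

/-- The restricted complex `X[L]` is (ε, (d_2, …, d_{k−1}, p))-regular. -/
def RestrRegular (k : ℕ) (ε : ℝ) (d : ℕ → ℝ) (L : Finset (Fin l)) (p : ℝ) : Prop :=
  ∀ j, 2 ≤ j → j ≤ k → ∀ L' ∈ L.powersetCard j,
    RegPairC X.gnd (X.cross j) (j-1) ε (if j = k then p else d j)
      (X.restr j L) (X.restr (j-1) L')

/-- clique set `K_i` of the level-j graph of the complex (level 1: crossing sets). -/
def KsetLvl (j i : ℕ) : Finset (Finset V) :=
  if j ≤ 1 then X.cross i else Kset X.gnd j i (X.G j)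

end Cx

/-- `eCL`, `mCL` satisfy the counting lemma of Kohayakawa–Rödl–Skokan. -/
def CountingProp (eCL : ℝ → ℝ → ℕ → ℕ → ℝ) (mCL : ℝ → ℝ → ℕ → ℕ → ℕ) : Prop :=
  ∀ γ d₀ : ℝ, 0 < γ → 0 < d₀ → ∀ k l : ℕ, 2 ≤ k → k ≤ l →
    (0 < eCL γ d₀ k l ∧ eCL γ d₀ k l ≤ 1) ∧
    ∀ (V₀ : Type) [DecidableEq V₀], ∀ (X : Cx V₀ l) (m : ℕ) (lam ε : ℝ) (d : ℕ → ℝ),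
      0 ≤ lam → lam < 1/4 → 0 < ε → ε ≤ eCL γ d₀ k l → mCL γ d₀ k l ≤ m →
      (∀ j, 2 ≤ j → j ≤ k → d₀ ≤ d j) →
      X.IsComplex k →
      (∀ i, |((X.C i).card : ℝ) - (m : ℝ)| ≤ lam * m) →
      X.IsRegular k ε d →
      |((Kset X.gnd k l (X.G k)).card : ℝ) -
        (∏ j ∈ Finset.Icc 2 k, d j ^ (l.choose j)) * ∏ i, ((X.C i).card : ℝ)|
        ≤ γ * ((∏ j ∈ Finset.Icc 2 k, d j ^ (l.choose j)) * ∏ i, ((X.C i).card : ℝ))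

/-- `eRI` is a legitimate function for defining regularity instances. -/
def GoodERI (eRI : ℕ → ℕ → ℝ) : Prop :=
  (∀ t k : ℕ, 1 ≤ t → 2 ≤ k → 0 < eRI t k ∧ eRI t k ≤ 1) ∧
  (∀ k t t' : ℕ, 1 ≤ t → t ≤ t' → eRI t' k ≤ eRI t k) ∧
  (∀ t k k' : ℕ, 2 ≤ k → k ≤ k' → eRI t k' ≤ eRI t k) ∧
  (∀ k : ℕ, Filter.Tendsto (fun t => eRI t k) Filter.atTop (nhds 0)) ∧
  ∃ (eCL : ℝ → ℝ → ℕ → ℕ → ℝ) (mCL : ℝ → ℝ → ℕ → ℕ → ℕ),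
    CountingProp eCL mCL ∧
    ∀ t k : ℕ, 1 ≤ t → 2 ≤ k →
      eRI t k < eCL (1/(t:ℝ)) (1/(t:ℝ)) (k-1) k / (4 * (t:ℝ) ^ (4^k))

/-- `max_i a_i` over `i ∈ [k−1]` -/
def maxA (k : ℕ) (a : ℕ → ℕ) : ℕ := (Finset.Icc 1 (k-1)).sup a

/-- `(ε, a, d)` is a regularity instance. -/
def RegInstance (eRI : ℕ → ℕ → ℝ) (k : ℕ) (ε : ℝ) (a : ℕ → ℕ) (d : Addr → ℝ) : Prop :=
  2 ≤ k ∧ (∀ j, 1 ≤ j → j ≤ k - 1 → 1 ≤ a j) ∧ 0 < ε ∧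
  ε ≤ eRI (maxA k a) k ∧ DensityFun k a d

section Counting

variable {W : Type} [Fintype W] [DecidableEq W]

/-- `S` spans an induced copy of `Fg` in `H` (both k-graphs). -/
def InducedCopy (Fg : Finset (Finset W)) (H : Finset (Finset V)) (k : ℕ) (S : Finset V) :
    Prop :=
  ∃ e : W → V, Function.Injective e ∧ Finset.univ.image e = S ∧
    ∀ A : Finset W, A.card = k → (A.image e ∈ H ↔ A ∈ Fg)

/-- the size of the automorphism group of `Fg` -/
def AutCount (Fg : Finset (Finset W)) : ℕ :=
  Nat.card {π : W ≃ W // ∀ A : Finset W, A.image π ∈ Fg ↔ A ∈ Fg}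

/-- the number `IC_σ(F, H)` of σ-induced copies of `Fg` in the complex `X` -/
def ICosig {l : ℕ} (X : Cx V l) (k : ℕ) (Fg : Finset (Finset W)) (σ : W ≃ Fin l) : ℕ :=
  Set.ncard {e : W → V |
    (∀ v, e v ∈ X.C (σ v)) ∧
    Finset.univ.image e ∈ X.KsetLvl (k-1) l ∧
    ∀ A : Finset W, A.card = k → (A.image e ∈ X.G k ↔ A ∈ Fg)}

/-- `IC(F, d, x̂, σ)` -/
def ICs (Fg : Finset (Finset W)) (k l : ℕ) (a : ℕ → ℕ) (d : Addr → ℝ)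
    (x : Addr) (σ : W → ℕ) : ℝ :=
  (∏ B ∈ x.1.powersetCard k,
    if ∃ A ∈ Fg, A.image σ = B then d (restrictA x (k-1) B)
    else 1 - d (restrictA x (k-1) B)) *
  ∏ j ∈ Finset.Icc 2 (k-1), ((a j : ℝ) ^ (l.choose j))⁻¹

/-- `IC(F, d, x̂)` -/
def ICa (Fg : Finset (Finset W)) (k l : ℕ) (a : ℕ → ℕ) (d : Addr → ℝ) (x : Addr) : ℝ :=
  (AutCount Fg : ℝ)⁻¹ *
    ∑ᶠ σ ∈ {σ : W → ℕ | Set.BijOn σ Set.univ ↑x.1}, ICs Fg k l a d x σ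

/-- `IC(F, d)` -/
def IC (Fg : Finset (Finset W)) (k l : ℕ) (a : ℕ → ℕ) (d : Addr → ℝ) : ℝ :=
  (((a 1).choose l : ℝ))⁻¹ * ∑ᶠ x ∈ {x : Addr | IsAddress l (k-1) a x}, ICa Fg k l a d x

end Counting

end

end HypReg

namespace HypReg

open Finset

section Aux

attribute [local instance 10] Classical.propDecidable

variable {V : Type*} [DecidableEq V]

theorem mem_sing {U : Finset V} {T : Finset V} : T ∈ sing U ↔ ∃ v ∈ U, T = {v} := by
  simp [sing, eq_comm]

/-- Uniform description of the clique operator at all levels. -/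
theorem mem_KsetC {W : Finset V} {cr B : Finset (Finset V)} {i j : ℕ} {e : Finset V} :
    e ∈ KsetC W cr i j B ↔
      e ∈ (if i = 1 then cr else W.powersetCard j) ∧ ∀ T ∈ e.powersetCard i, T ∈ B := by
  unfold KsetC Kset
  split_ifs with h
  · subst h
    simp [Finset.mem_filter, Finset.powersetCard_one]
  · simp [Finset.mem_filter]

theorem exists_powersetCard_mem_of_pair {e : Finset V} {i : ℕ} (hi : 2 ≤ i) (he : e.card = i + 1)
    {u v : V} (hu : u ∈ e) (hv : v ∈ e) : ∃ T ∈ e.powersetCard i, u ∈ T ∧ v ∈ T := by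
  have hsub : ({u, v} : Finset V) ⊆ e := by
    intro x hx
    simp only [Finset.mem_insert, Finset.mem_singleton] at hx
    rcases hx with rfl | rfl <;> assumption
  obtain ⟨T, h1, h2, h3⟩ := Finset.exists_subsuperset_card_eq hsub
    ((Finset.card_le_two).trans hi) (by omega : i ≤ e.card)
  exact ⟨T, Finset.mem_powersetCard.2 ⟨h2, h3⟩, h1 (by simp), h1 (by simp)⟩

theorem exists_powersetCard_mem {V : Type*} {e : Finset V} {i : ℕ} (hi : 1 ≤ i) (he : i ≤ e.card)
    {u : V} (hu : u ∈ e) : ∃ T ∈ e.powersetCard i, u ∈ T := by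
  obtain ⟨T, h1, h2, h3⟩ := Finset.exists_subsuperset_card_eq
    (Finset.singleton_subset_iff.2 hu) (by simpa using hi) he
  exact ⟨T, Finset.mem_powersetCard.2 ⟨h2, h3⟩, h1 (by simp)⟩

theorem card_image_eq_card_image {α β γ : Type*} [DecidableEq β] [DecidableEq γ] (s : Finset α)
    (f : α → β) (g : α → γ) (h : ∀ x ∈ s, ∀ y ∈ s, f x = f y ↔ g x = g y) :
    (s.image f).card = (s.image g).card := by
  classical
  apply le_antisymm
  · refine Finset.card_le_card_of_forall_subsingleton (fun b c => ∃ x ∈ s, f x = b ∧ g x = c) ?_ ?_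
    · intro b hb
      obtain ⟨x, hx, rfl⟩ := Finset.mem_image.1 hb
      exact ⟨g x, Finset.mem_image_of_mem _ hx, x, hx, rfl, rfl⟩
    · rintro c - b ⟨-, x, hx, rfl, rfl⟩ b' ⟨-, y, hy, rfl, hxy⟩
      exact (h x hx y hy).2 hxy.symm
  · refine Finset.card_le_card_of_forall_subsingleton (fun c b => ∃ x ∈ s, f x = b ∧ g x = c) ?_ ?_
    · intro b hb
      obtain ⟨x, hx, rfl⟩ := Finset.mem_image.1 hb
      exact ⟨f x, Finset.mem_image_of_mem _ hx, x, hx, rfl, rfl⟩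
    · rintro c - b ⟨-, x, hx, rfl, rfl⟩ b' ⟨-, y, hy, hxy, rfl⟩
      exact (h x hx y hy).1 hxy.symm

namespace PartFam

variable {F : PartFam V} {k : ℕ} {a : ℕ → ℕ}

theorem mem_cross {i : ℕ} {S : Finset V} :
    S ∈ F.cross i ↔ (S ⊆ F.gnd ∧ S.card = i) ∧
      ∀ u ∈ S, ∀ v ∈ S, u ≠ v → F.vClass u ≠ F.vClass v := by
  simp [cross, Finset.mem_filter, Finset.mem_powersetCard]

theorem cross_subset {i : ℕ} : F.cross i ⊆ F.gnd.powersetCard i := Finset.filter_subset _ _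

theorem cross_of_subset {i j : ℕ} {S T : Finset V} (hS : S ∈ F.cross i)
    (hT : T ∈ S.powersetCard j) :
    T ∈ F.cross j := by
  rw [mem_cross] at *
  rw [Finset.mem_powersetCard] at hT
  exact ⟨⟨hT.1.trans hS.1.1, hT.2⟩, fun u hu v hv => hS.2 u (hT.1 hu) v (hT.1 hv)⟩

theorem mem_polyad_one {J T : Finset V} :
    T ∈ F.polyad 1 J ↔ ∃ u ∈ J, ∃ v ∈ F.vClass u, T = {v} := by
  simp only [polyad, if_true, mem_sing, Finset.mem_sup]
  constructor
  · rintro ⟨v, ⟨u, hu, hv⟩, rfl⟩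
    exact ⟨u, hu, v, hv, rfl⟩
  · rintro ⟨u, hu, v, hv, rfl⟩
    exact ⟨v, ⟨u, hu, hv⟩, rfl⟩

theorem singleton_mem_polyad_one {J : Finset V} {v : V} :
    {v} ∈ F.polyad 1 J ↔ ∃ u ∈ J, v ∈ F.vClass u := by
  simp [mem_polyad_one]

theorem mem_polyad {j : ℕ} (hj : 2 ≤ j) {J T : Finset V} :
    T ∈ F.polyad j J ↔ ∃ S ∈ J.powersetCard j, T ∈ F.cls j S := by
  have : j ≠ 1 := by omega
  simp only [polyad, if_neg this, Finset.mem_sup]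

theorem polyad_mono {j : ℕ} (hj : 1 ≤ j) {I J : Finset V} (h : I ⊆ J) :
    F.polyad j I ⊆ F.polyad j J := by
  intro T hT
  rcases hj.eq_or_lt with rfl | hj
  · rw [mem_polyad_one] at *
    obtain ⟨u, hu, hh⟩ := hT
    exact ⟨u, h hu, hh⟩
  · rw [mem_polyad hj] at *
    obtain ⟨S, hS, hh⟩ := hT
    exact ⟨S, Finset.powersetCard_mono h hS, hh⟩

theorem mem_polyCliques {i : ℕ} {I J : Finset V} :
    I ∈ F.polyCliques (i + 1) J ↔
      I ∈ (if i = 1 then F.cross (i + 1) else F.gnd.powersetCard (i + 1)) ∧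
        ∀ T ∈ I.powersetCard i, T ∈ F.polyad i J := by
  simp only [polyCliques, mem_KsetC, Nat.add_sub_cancel]

theorem IsFamily.mem_vClass (hF : F.IsFamily k a) {v : V} (hv : v ∈ F.gnd) : v ∈ F.vClass v :=
    hF.1 v hv

theorem IsFamily.vClass_subset (hF : F.IsFamily k a) {v : V} (hv : v ∈ F.gnd) :
    F.vClass v ⊆ F.gnd := hF.2.1 v hv

theorem IsFamily.mem_vClass_iff (hF : F.IsFamily k a) {u v : V} (hu : u ∈ F.gnd) (hv : v ∈ F.gnd) :
    u ∈ F.vClass v ↔ F.vClass u = F.vClass v :=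
  ⟨hF.2.2.1 u hu v hv, fun h => h ▸ hF.1 u hu⟩

theorem IsFamily.mem_cls_self (hF : F.IsFamily k a) {j : ℕ} (h2 : 2 ≤ j) (hk : j ≤ k - 1)
    {J : Finset V}
    (hJ : J ∈ F.cross j) : J ∈ F.cls j J := (hF.2.2.2.2.2 j h2 hk).1 J hJ

theorem IsFamily.cls_eq (hF : F.IsFamily k a) {j : ℕ} (h2 : 2 ≤ j) (hk : j ≤ k - 1) {I J : Finset V}
    (hJ : J ∈ F.cross j) (hI : I ∈ F.cls j J) : F.cls j I = F.cls j J :=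
  (hF.2.2.2.2.2 j h2 hk).2.1 J hJ I hI

theorem IsFamily.cls_subset (hF : F.IsFamily k a) {j : ℕ} (h2 : 2 ≤ j) (hk : j ≤ k - 1)
    {J : Finset V}
    (hJ : J ∈ F.cross j) : F.cls j J ⊆ F.polyCliques j J := (hF.2.2.2.2.2 j h2 hk).2.2.1 J hJ

theorem IsFamily.cls_subset_cross (hF : F.IsFamily k a) {j : ℕ} (h2 : 2 ≤ j) (hk : j ≤ k - 1)
    {J : Finset V}
    (hJ : J ∈ F.cross j) : F.cls j J ⊆ F.cross j :=
  (hF.cls_subset h2 hk hJ).trans ((hF.2.2.2.2.2 j h2 hk).2.2.2.1 J hJ)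

theorem IsFamily.polyad_subset_cross (hF : F.IsFamily k a) {i j : ℕ} (h1 : 1 ≤ j) (hk : j ≤ k - 1)
    {J : Finset V}
    (hJ : J ∈ F.cross i) : F.polyad j J ⊆ F.cross j := by
  intro T hT
  rcases h1.eq_or_lt with rfl | h2
  · obtain ⟨u, hu, v, hv, rfl⟩ := mem_polyad_one.1 hT
    have := hF.vClass_subset ((mem_cross.1 hJ).1.1 hu) hv
    simp [mem_cross, this]
  · obtain ⟨S, hS, hT⟩ := (mem_polyad h2).1 hT
    exact hF.cls_subset_cross h2 hk (cross_of_subset hJ hS) hT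

/-- If all `j`-subsets of `I` lie in the polyad of `J`, the polyad of `I` is contained in it. -/
theorem IsFamily.polyad_subset_polyad (hF : F.IsFamily k a) {i i' j : ℕ} (h1 : 1 ≤ j)
    (hk : j ≤ k - 1) {I J : Finset V}
    (hI : I ∈ F.cross i) (hJ : J ∈ F.cross i') (h : ∀ T ∈ I.powersetCard j, T ∈ F.polyad j J) :
    F.polyad j I ⊆ F.polyad j J := by
  intro T hT
  rcases h1.eq_or_lt with rfl | h2
  · obtain ⟨u, hu, v, hv, rfl⟩ := mem_polyad_one.1 hT
    obtain ⟨w, hw, huw⟩ := singleton_mem_polyad_one.1 (h {u} (by simp [Finset.powersetCard_one, hu]))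
    refine singleton_mem_polyad_one.2 ⟨w, hw, ?_⟩
    rwa [← hF.2.2.1 u ((mem_cross.1 hI).1.1 hu) w ((mem_cross.1 hJ).1.1 hw) huw]
  · obtain ⟨S, hS, hT⟩ := (mem_polyad h2).1 hT
    obtain ⟨S', hS', hSS'⟩ := (mem_polyad h2).1 (h S hS)
    refine (mem_polyad h2).2 ⟨S', hS', ?_⟩
    rwa [← hF.cls_eq h2 hk (cross_of_subset hJ hS') hSS']

theorem IsFamily.polyad_succ (hF : F.IsFamily k a) {i m : ℕ} (h1 : 1 ≤ i) (hk : i + 1 ≤ k - 1)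
    {S L : Finset V}
    (hL : L ∈ F.cross m) (hS : S ∈ F.polyad (i + 1) L) :
    ∀ T ∈ S.powersetCard i, T ∈ F.polyad i L := by
  obtain ⟨S', hS', hSS'⟩ := (mem_polyad (by omega)).1 hS
  have := hF.cls_subset (by omega) hk (cross_of_subset hL hS') hSS'
  intro T hT
  exact polyad_mono h1 (Finset.mem_powersetCard.1 hS').1 ((mem_polyCliques.1 this).2 T hT)

theorem IsFamily.polyad_down (hF : F.IsFamily k a) {i m : ℕ} (hk : i ≤ k - 1) {S L : Finset V}
    (hL : L ∈ F.cross m) (hS : S ∈ F.polyad i L) {j : ℕ} (h1 : 1 ≤ j) (hj : j ≤ i)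
    {T : Finset V} (hT : T ∈ S.powersetCard j) : T ∈ F.polyad j L := by
  induction i, hj using Nat.le_induction generalizing S with
  | base =>
    have hc := (mem_cross.1 (hF.polyad_subset_cross h1 hk hL hS)).1.2
    rw [Finset.mem_powersetCard] at hT
    rwa [Finset.eq_of_subset_of_card_le hT.1 (by omega)]
  | succ i hi ih =>
    have hc := (mem_cross.1 (hF.polyad_subset_cross (by omega) hk hL hS)).1.2
    rw [Finset.mem_powersetCard] at hT
    obtain ⟨R, hR1, hR2, hR3⟩ := Finset.exists_subsuperset_card_eq hT.1 (by omega : T.card ≤ i)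
      (by omega)
    exact ih (by omega)
      (hF.polyad_succ (by omega) hk hL hS R (Finset.mem_powersetCard.2 ⟨hR2, hR3⟩))
      (Finset.mem_powersetCard.2 ⟨hR1, hT.2⟩)

theorem IsFamily.polyCliques_down (hF : F.IsFamily k a) {i m : ℕ} (hk : i ≤ k - 1) {S L : Finset V}
    (hL : L ∈ F.cross m) (hS : S ∈ F.polyCliques (i + 1) L) {j : ℕ} (h1 : 1 ≤ j) (hj : j ≤ i)
    {T : Finset V} (hT : T ∈ S.powersetCard j) : T ∈ F.polyad j L := by
  have hS' := mem_polyCliques.1 hS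
  have hc : S.card = i + 1 := by
    have := hS'.1
    split_ifs at this
    · exact (mem_cross.1 this).1.2
    · exact (Finset.mem_powersetCard.1 this).2
  rw [Finset.mem_powersetCard] at hT
  obtain ⟨R, hR1, hR2, hR3⟩ := Finset.exists_subsuperset_card_eq hT.1 (by omega : T.card ≤ i)
      (by omega)
  exact hF.polyad_down hk hL (hS'.2 R (Finset.mem_powersetCard.2 ⟨hR2, hR3⟩)) h1 hj
    (Finset.mem_powersetCard.2 ⟨hR1, hT.2⟩)

theorem IsFamily.polyCliques_subset_cross (hF : F.IsFamily k a) {i m : ℕ} (h1 : 1 ≤ i)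
    (hk : i ≤ k - 1) {L : Finset V}
    (hL : L ∈ F.cross m) : F.polyCliques (i + 1) L ⊆ F.cross (i + 1) := by
  intro S hS
  obtain ⟨hS1, hS2⟩ := mem_polyCliques.1 hS
  split_ifs at hS1 with h
  · exact hS1
  · rw [Finset.mem_powersetCard] at hS1
    refine mem_cross.2 ⟨hS1, fun u hu v hv huv => ?_⟩
    obtain ⟨T, hT, huT, hvT⟩ := exists_powersetCard_mem_of_pair (by omega) hS1.2 hu hv
    exact (mem_cross.1 (hF.polyad_subset_cross h1 hk hL (hS2 T hT))).2 u huT v hvT huv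

theorem IsFamily.self_mem_polyad (hF : F.IsFamily k a) {i j : ℕ} (h1 : 1 ≤ j) (hk : j ≤ k - 1)
    {J T : Finset V}
    (hJ : J ∈ F.cross i) (hT : T ∈ J.powersetCard j) : T ∈ F.polyad j J := by
  rcases h1.eq_or_lt with rfl | h2
  · obtain ⟨hTJ, hc⟩ := Finset.mem_powersetCard.1 hT
    obtain ⟨v, rfl⟩ := Finset.card_eq_one.1 hc
    have hv : v ∈ J := hTJ (by simp)
    exact singleton_mem_polyad_one.2 ⟨v, hv, hF.1 v ((mem_cross.1 hJ).1.1 hv)⟩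
  · exact (mem_polyad h2).2 ⟨T, hT, hF.mem_cls_self h2 hk (cross_of_subset hJ hT)⟩

theorem IsFamily.polyCliques_subset_polyCliques (hF : F.IsFamily k a) {i i' : ℕ} (h1 : 1 ≤ i)
    (hk : i ≤ k - 1)
    {I J : Finset V} (hJ : J ∈ F.cross i') (hI : I ∈ F.polyCliques (i + 1) J) :
    F.polyCliques (i + 1) I ⊆ F.polyCliques (i + 1) J := by
  intro S hS
  rw [mem_polyCliques] at hS ⊢
  exact ⟨hS.1, fun T hT => hF.polyad_subset_polyad h1 hk (hF.polyCliques_subset_cross h1 hk hJ hI)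
    hJ (mem_polyCliques.1 hI).2 (hS.2 T hT)⟩

end PartFam

namespace LabFam

variable {P : LabFam V} {k : ℕ} {a : ℕ → ℕ}

theorem IsLabeled.vIdx_injOn (hP : P.IsLabeled k a) {i : ℕ} {L : Finset V}
    (hL : L ∈ P.toPartFam.cross i) : Set.InjOn P.vIdx L := by
  rw [PartFam.mem_cross] at hL
  intro u hu v hv h
  by_contra huv
  exact hL.2 u hu v hv huv ((hP.2.2.1 u (hL.1.1 hu) v (hL.1.1 hv)).1 h)

theorem image_filter_vIdx (P : LabFam V) {A : Finset V} {M : Finset ℕ} (hA : M ⊆ A.image P.vIdx) :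
    (A.filter fun v => P.vIdx v ∈ M).image P.vIdx = M := by
  ext x
  simp only [Finset.mem_image, Finset.mem_filter]
  constructor
  · rintro ⟨v, hv, rfl⟩; exact hv.2
  · intro hx
    obtain ⟨v, hv, rfl⟩ := Finset.mem_image.1 (hA hx)
    exact ⟨v, ⟨hv, hx⟩, rfl⟩

theorem IsLabeled.card_filter_vIdx (hP : P.IsLabeled k a) {m : ℕ} {L : Finset V}
    (hL : L ∈ P.toPartFam.cross m) {M : Finset ℕ} (hM : M ⊆ L.image P.vIdx) :
    (L.filter fun v => P.vIdx v ∈ M).card = M.card := by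
  rw [← Finset.card_image_of_injOn
    ((hP.vIdx_injOn hL).mono (Finset.coe_subset.2 (Finset.filter_subset _ _))),
    P.image_filter_vIdx hM]

theorem IsLabeled.image_vIdx_subset (hP : P.IsLabeled k a) {i m : ℕ} {L K : Finset V}
    (hL : L ∈ P.toPartFam.cross m) (hK : K ∈ P.toPartFam.cross i)
    (h : ∀ S ∈ K.powersetCard 1, S ∈ P.toPartFam.polyad 1 L) :
    K.image P.vIdx ⊆ L.image P.vIdx := by
  intro x hx
  obtain ⟨v, hv, rfl⟩ := Finset.mem_image.1 hx
  obtain ⟨u, hu, huv⟩ := PartFam.singleton_mem_polyad_one.1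
    (h {v} (by simp [Finset.powersetCard_one, hv]))
  refine Finset.mem_image.2 ⟨u, hu, ?_⟩
  have hvg := (PartFam.mem_cross.1 hK).1.1 hv
  have hug := (PartFam.mem_cross.1 hL).1.1 hu
  exact ((hP.2.2.1 v hvg u hug).2 (hP.1.2.2.1 v hvg u hug huv)).symm

theorem IsLabeled.image_vIdx_eq (hP : P.IsLabeled k a) {m : ℕ} {L K : Finset V}
    (hL : L ∈ P.toPartFam.cross m) (hK : K ∈ P.toPartFam.cross m)
    (h : ∀ S ∈ K.powersetCard 1, S ∈ P.toPartFam.polyad 1 L) :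
    K.image P.vIdx = L.image P.vIdx := by
  refine Finset.eq_of_subset_of_card_le (hP.image_vIdx_subset hL hK h) ?_
  rw [Finset.card_image_of_injOn (hP.vIdx_injOn hL), Finset.card_image_of_injOn (hP.vIdx_injOn hK),
    (PartFam.mem_cross.1 hL).1.2, (PartFam.mem_cross.1 hK).1.2]

/-- A set in a polyad lies in the class of the subset with the same indices. -/
theorem IsLabeled.image_eq_of_mem_cls (hP : P.IsLabeled k a) {j : ℕ} (h2 : 2 ≤ j) (hk : j ≤ k - 1)
    {S S' : Finset V} (hS' : S' ∈ P.toPartFam.cross j) (hS : S ∈ P.cls j S') :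
    S.image P.vIdx = S'.image P.vIdx := by
  have hc := hP.1.cls_subset_cross h2 hk hS' hS
  refine hP.image_vIdx_eq hS' hc fun T hT => ?_
  refine hP.1.polyad_down hk hS' ?_ le_rfl (by omega) hT
  exact (PartFam.mem_polyad h2).2 ⟨S', by simp [(PartFam.mem_cross.1 hS').1.2], hS⟩

theorem IsLabeled.filter_mem_cls (hP : P.IsLabeled k a) {m : ℕ} {L K : Finset V}
    (hL : L ∈ P.toPartFam.cross m) (hK : K ∈ P.toPartFam.cross m)
    (hKL : K.image P.vIdx = L.image P.vIdx) {M : Finset ℕ} (hM : M ⊆ L.image P.vIdx)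
    (h2 : 2 ≤ M.card) (hk : M.card ≤ k - 1)
    (h : ∀ S ∈ K.powersetCard M.card, S ∈ P.toPartFam.polyad M.card L) :
    (K.filter fun v => P.vIdx v ∈ M) ∈ P.cls M.card (L.filter fun v => P.vIdx v ∈ M) := by
  have hKM := P.image_filter_vIdx (hKL ▸ hM : M ⊆ K.image P.vIdx)
  have hcard := hP.card_filter_vIdx hK (hKL ▸ hM : M ⊆ K.image P.vIdx)
  obtain ⟨S', hS', hS⟩ := (PartFam.mem_polyad h2).1
    (h _ (Finset.mem_powersetCard.2 ⟨Finset.filter_subset _ _, hcard⟩))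
  have himS := hP.image_eq_of_mem_cls h2 hk (PartFam.cross_of_subset hL hS') hS
  rw [hKM] at himS
  have : S' = L.filter fun v => P.vIdx v ∈ M := by
    ext v
    rw [Finset.mem_filter]
    constructor
    · intro hv
      exact ⟨(Finset.mem_powersetCard.1 hS').1 hv, himS ▸ Finset.mem_image_of_mem _ hv⟩
    · rintro ⟨hv, hvM⟩
      rw [himS] at hvM
      obtain ⟨w, hw, hwv⟩ := Finset.mem_image.1 hvM
      rwa [← hP.vIdx_injOn hL ((Finset.mem_powersetCard.1 hS').1 hw) hv hwv]
  rwa [← this]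

theorem IsLabeled.addrOf_eq (hP : P.IsLabeled k a) {j i : ℕ} (h2 : 2 ≤ j) (hk : j ≤ k - 1)
    {T T' : Finset V} (hT' : T' ∈ P.toPartFam.cross j) (hT : T ∈ P.cls j T') :
    P.addrOf i T = P.addrOf i T' := by
  have himg := hP.image_eq_of_mem_cls h2 hk hT' hT
  have hTc := hP.1.cls_subset_cross h2 hk hT' hT
  unfold addrOf
  rw [himg]
  refine Prod.ext rfl (funext fun M => ?_)
  dsimp only
  split_ifs with hM
  · have hMj : M.card ≤ j := by
      refine (Finset.card_le_card hM.1).trans (Finset.card_image_le.trans ?_)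
      rw [(PartFam.mem_cross.1 hT').1.2]
    have hmem := hP.filter_mem_cls hT' hTc himg hM.1 hM.2.1 (hMj.trans hk) fun S hS =>
      hP.1.polyad_down hk hT' ((PartFam.mem_polyad h2).2
        ⟨T', by simp [(PartFam.mem_cross.1 hT').1.2], hT⟩) (by omega) hMj hS
    refine (hP.2.2.2 _ hM.2.1 (hMj.trans hk)).2.1 _ ?_ _ hmem
    exact PartFam.cross_of_subset hT' (Finset.mem_powersetCard.2
      ⟨Finset.filter_subset _ _, hP.card_filter_vIdx hT' hM.1⟩)
  · rfl

/-- A clique of the polyad at address `x` has its own polyad inside the polyad at `x`. -/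
theorem IsLabeled.polyad_subset_polyAt (hP : P.IsLabeled k a) {j : ℕ} (h1 : 1 ≤ j) (hk : j ≤ k - 1)
    {x : Addr} {K : Finset V} (hK : K ∈ P.toPartFam.cross (j + 1))
    (h : ∀ T ∈ K.powersetCard j, T ∈ P.polyAt j x) :
    P.toPartFam.polyad j K ⊆ P.polyAt j x := by
  intro T hT
  rcases h1.eq_or_lt with rfl | h2
  · obtain ⟨u, hu, v, hv, rfl⟩ := PartFam.mem_polyad_one.1 hT
    have := h {u} (by simp [Finset.powersetCard_one, hu])
    have hug := (PartFam.mem_cross.1 hK).1.1 hu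
    have hvg := hP.1.vClass_subset hug hv
    simp only [polyAt, if_true, mem_sing, Finset.mem_filter] at this ⊢
    obtain ⟨w, hw, hwu⟩ := this
    rw [Finset.singleton_inj] at hwu
    subst hwu
    exact ⟨v, ⟨hvg, by rw [(hP.2.2.1 v hvg u hug).2 (hP.1.2.2.1 v hvg u hug hv)]; exact hw.2⟩, rfl⟩
  · obtain ⟨S, hS, hTS⟩ := (PartFam.mem_polyad h2).1 hT
    have hSx := h S hS
    have hj1 : j ≠ 1 := by omega
    have hj2 : ¬ j ≤ 1 := by omega
    simp only [polyAt, if_neg hj1, Finset.mem_sup, partAt, if_neg hj2, Finset.mem_filter] at hSx ⊢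
    obtain ⟨B, hB, hSc, had, hl⟩ := hSx
    refine ⟨B, hB, hP.1.cls_subset_cross h2 hk hSc hTS, ?_, ?_⟩
    · rw [hP.addrOf_eq h2 hk hSc hTS, had]
    · rw [(hP.2.2.2 j h2 hk).2.1 S hSc T hTS, hl]

end LabFam

namespace PartFam

variable {F : PartFam V} {k : ℕ} {a : ℕ → ℕ}

/-- The polyad complex of a set `K` whose vertices are enumerated by `e`. -/
noncomputable def cx (F : PartFam V) (K : Finset V) {l : ℕ} (e : Fin l → V) : Cx V l where
  C i := F.vClass (e i)
  G j := F.polyad j K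

theorem cx_gnd (K : Finset V) {l : ℕ} {e : Fin l → V} (he : Finset.univ.image e = K) :
    (F.cx K e).gnd = K.sup F.vClass := by
  subst he
  simp only [Cx.gnd, cx, Finset.sup_image]
  rfl

theorem IsFamily.mem_cx_cross (hF : F.IsFamily k a) {m i : ℕ} {K : Finset V} (hK : K ∈ F.cross m)
    {l : ℕ} {e : Fin l → V} (he : Finset.univ.image e = K) {S : Finset V} :
    S ∈ (F.cx K e).cross i ↔ S ⊆ K.sup F.vClass ∧ S ∈ F.cross i := by
  have heK : ∀ t, e t ∈ F.gnd := fun t => (mem_cross.1 hK).1.1 (he ▸ by simp)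
  simp only [Cx.cross, cx_gnd K he, Finset.mem_filter, Finset.mem_powersetCard, mem_cross]
  constructor
  · rintro ⟨⟨h1, h2⟩, h3⟩
    refine ⟨h1, ⟨fun v hv => ?_, h2⟩, fun u hu v hv huv huv' => huv ?_⟩
    · obtain ⟨w, hw, hvw⟩ := Finset.mem_sup.1 (h1 hv)
      exact hF.vClass_subset ((mem_cross.1 hK).1.1 hw) hvw
    · obtain ⟨w, hw, hvw⟩ := Finset.mem_sup.1 (h1 hv)
      have hwg := (mem_cross.1 hK).1.1 hw
      have hvg := hF.vClass_subset hwg hvw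
      obtain ⟨w', hw', huw⟩ := Finset.mem_sup.1 (h1 hu)
      have hug := hF.vClass_subset ((mem_cross.1 hK).1.1 hw') huw
      rw [← he] at hw
      obtain ⟨t, -, rfl⟩ := Finset.mem_image.1 hw
      refine Finset.card_le_one.1 (h3 t) u ?_ v ?_
      · refine Finset.mem_inter.2 ⟨hu, ?_⟩
        change u ∈ F.vClass (e t)
        rw [hF.mem_vClass_iff hug hwg, huv', ← hF.mem_vClass_iff hvg hwg]
        exact hvw
      · exact Finset.mem_inter.2 ⟨hv, hvw⟩
  · rintro ⟨h1, ⟨h2, h3⟩, h4⟩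
    refine ⟨⟨h1, h3⟩, fun t => Finset.card_le_one.2 fun u hu v hv => ?_⟩
    by_contra huv
    rw [Finset.mem_inter] at hu hv
    exact h4 u hu.1 v hv.1 huv (((hF.mem_vClass_iff (h2 hu.1) (heK t)).1 hu.2).trans
      ((hF.mem_vClass_iff (h2 hv.1) (heK t)).1 hv.2).symm)

theorem IsFamily.polyad_subset_sup (hF : F.IsFamily k a) {m i : ℕ} (h1 : 1 ≤ i) (hk : i ≤ k - 1)
    {J T : Finset V} (hJ : J ∈ F.cross m) (hT : T ∈ F.polyad i J) : T ⊆ J.sup F.vClass := by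
  intro v hv
  obtain ⟨u, hu, huv⟩ := singleton_mem_polyad_one.1 (hF.polyad_down hk hJ hT le_rfl h1
    (T := {v}) (by simp [Finset.powersetCard_one, hv]))
  exact Finset.mem_sup.2 ⟨u, hu, huv⟩

theorem IsFamily.subset_of_mem_cls (hF : F.IsFamily k a) {m i : ℕ} (h2 : 2 ≤ i) (hk : i ≤ k - 1)
    {K J S T : Finset V} (hK : K ∈ F.cross m) (hJ : J ⊆ K) (hS : S ∈ K.powersetCard i)
    (hT : T ∈ F.cls i S) (hTJ : T ⊆ J.sup F.vClass) : S ⊆ J := by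
  have hSc := cross_of_subset hK hS
  have hSm := Finset.mem_powersetCard.1 hS
  have hTc := hF.cls_subset_cross h2 hk hSc hT
  have hKg := (mem_cross.1 hK).1.1
  have hTS : T.image F.vClass ⊆ S.image F.vClass := by
    intro C hC
    obtain ⟨v, hv, rfl⟩ := Finset.mem_image.1 hC
    obtain ⟨u, hu, hvu⟩ := Finset.mem_sup.1
      (hF.polyad_subset_sup (by omega) hk hSc ((mem_polyad h2).2 ⟨S, by simp [hSm.2], hT⟩) hv)
    refine Finset.mem_image.2 ⟨u, hu, ?_⟩
    exact (hF.2.2.1 v ((mem_cross.1 hTc).1.1 hv) u (hKg (hSm.1 hu)) hvu).symm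
  have hinj : ∀ {n : ℕ} {L : Finset V}, L ∈ F.cross n → Set.InjOn F.vClass L := by
    intro n L hL u hu v hv h
    by_contra huv
    exact (mem_cross.1 hL).2 u hu v hv huv h
  have heq : T.image F.vClass = S.image F.vClass := by
    refine Finset.eq_of_subset_of_card_le hTS ?_
    rw [Finset.card_image_of_injOn (hinj hSc), Finset.card_image_of_injOn (hinj hTc),
      (mem_cross.1 hTc).1.2, hSm.2]
  intro s hs
  have : F.vClass s ∈ T.image F.vClass := heq ▸ Finset.mem_image_of_mem _ hs
  obtain ⟨v, hv, hvs⟩ := Finset.mem_image.1 this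
  obtain ⟨w, hw, hvw⟩ := Finset.mem_sup.1 (hTJ hv)
  have := hF.2.2.1 v ((mem_cross.1 hTc).1.1 hv) w (hKg (hJ hw)) hvw
  rwa [hinj hK (hSm.1 hs) (hJ hw) (hvs.symm.trans this)]

theorem IsFamily.cx_restr (hF : F.IsFamily k a) {m : ℕ} {K : Finset V} (hK : K ∈ F.cross m)
    {l : ℕ} {e : Fin l → V} (he : Finset.univ.image e = K) {i : ℕ} (h1 : 1 ≤ i) (hk : i ≤ k - 1)
    (L : Finset (Fin l)) : (F.cx K e).restr i L = F.polyad i (L.image e) := by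
  have hLK : L.image e ⊆ K := he ▸ Finset.image_subset_image (Finset.subset_univ _)
  have hLc := cross_of_subset hK (Finset.mem_powersetCard.2 ⟨hLK, rfl⟩)
  have hsup : L.sup (F.cx K e).C = (L.image e).sup F.vClass := by
    rw [Finset.sup_image]; rfl
  unfold Cx.restr
  rw [hsup]
  split_ifs with h
  · subst h; simp [polyad]
  · ext T
    simp only [Finset.mem_filter]
    constructor
    · rintro ⟨hT, hTs⟩
      obtain ⟨S, hS, hTS⟩ := (mem_polyad (by omega)).1 (show T ∈ F.polyad i K from hT)
      exact (mem_polyad (by omega)).2 ⟨S, Finset.mem_powersetCard.2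
        ⟨hF.subset_of_mem_cls (by omega) hk hK hLK hS hTS hTs, (Finset.mem_powersetCard.1 hS).2⟩, hTS⟩
    · intro hT
      exact ⟨polyad_mono h1 hLK hT, hF.polyad_subset_sup h1 hk hLc hT⟩

theorem IsFamily.cx_isComplex (hF : F.IsFamily k a) {m : ℕ} {K : Finset V} (hK : K ∈ F.cross m)
    {l : ℕ} {e : Fin l → V} (he : Finset.univ.image e = K) (hinj : Function.Injective e) :
    (F.cx K e).IsComplex (k - 1) := by
  have heK : ∀ t, e t ∈ K := fun t => he ▸ by simp
  have hKg := (mem_cross.1 hK).1.1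
  refine ⟨fun s t hst => ?_, fun j h2 hk T hT => ?_, fun j h3 hk T hT => ?_⟩
  · rw [Finset.disjoint_left]
    intro v hv hv'
    have hvg := hF.vClass_subset (hKg (heK s)) hv
    refine (mem_cross.1 hK).2 (e s) (heK s) (e t) (heK t) (hinj.ne hst) ?_
    rw [← (hF.mem_vClass_iff hvg (hKg (heK s))).1 hv, (hF.mem_vClass_iff hvg (hKg (heK t))).1 hv']
  · exact (hF.mem_cx_cross hK he).2 ⟨hF.polyad_subset_sup (by omega) hk hK hT,
      hF.polyad_subset_cross (by omega) hk hK hT⟩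
  · have hT' : T ∈ F.polyad j K := hT
    simp only [Kset, Finset.mem_filter, Finset.mem_powersetCard, cx_gnd K he]
    refine ⟨⟨hF.polyad_subset_sup (by omega) hk hK hT,
      (mem_cross.1 (hF.polyad_subset_cross (by omega) hk hK hT')).1.2⟩, fun S hS => ?_⟩
    exact hF.polyad_down hk hK hT' (by omega) (by omega) (Finset.mem_powersetCard.2 hS)

theorem IsFamily.cx_isRegular (hF : F.IsFamily k a) {ε : ℝ} (hreg : F.PolyadReg k a ε)
    {K : Finset V} (hK : K ∈ F.cross k)
    {l : ℕ} {e : Fin l → V} (he : Finset.univ.image e = K) (hinj : Function.Injective e) :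
    (F.cx K e).IsRegular (k - 1) ε fun j => 1 / (a j : ℝ) := by
  intro j h2 hk L hL
  have hLK : L.image e ⊆ K := he ▸ Finset.image_subset_image (Finset.subset_univ _)
  have hLc : (L.image e).card = j := by
    rw [Finset.card_image_of_injective _ hinj, (Finset.mem_powersetCard.1 hL).2]
  have hJ : L.image e ∈ K.powersetCard j := Finset.mem_powersetCard.2 ⟨hLK, hLc⟩
  have hJc := cross_of_subset hK hJ
  have key := hreg K hK j h2 hk _ hJ
  rw [hF.cx_restr hK he (by omega) (by omega)]
  obtain ⟨i, rfl⟩ : ∃ i, j = i + 1 := ⟨j - 1, by omega⟩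
  simp only [Nat.add_sub_cancel] at key ⊢
  have hKs : ∀ R ⊆ F.polyad i (L.image e),
      KsetC (F.cx K e).gnd ((F.cx K e).cross (i + 1)) i (i + 1) R =
        KsetC F.gnd (F.cross (i + 1)) i (i + 1) R := by
    intro R hR
    ext S
    simp only [mem_KsetC, cx_gnd K he]
    have hsub : ∀ c, S.card = c → i ≤ c → (∀ T ∈ S.powersetCard i, T ∈ R) →
        S ⊆ K.sup F.vClass := by
      intro c hc hic h v hv
      obtain ⟨T, hT, hvT⟩ := exists_powersetCard_mem (by omega) (by omega : i ≤ S.card) hv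
      exact hF.polyad_subset_sup (by omega) (by omega) hK
        (polyad_mono (by omega) hLK (hR (h T hT))) hvT
    have hsg : K.sup F.vClass ⊆ F.gnd := Finset.sup_le fun v hv =>
      hF.vClass_subset ((mem_cross.1 hK).1.1 hv)
    split_ifs with h1
    · rw [hF.mem_cx_cross hK he]
      constructor
      · rintro ⟨⟨-, h3⟩, h4⟩; exact ⟨h3, h4⟩
      · rintro ⟨h3, h4⟩; exact ⟨⟨hsub _ (mem_cross.1 h3).1.2 (by omega) h4, h3⟩, h4⟩
    · simp only [Finset.mem_powersetCard] at hsub ⊢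
      constructor
      · rintro ⟨h3, h4⟩; exact ⟨⟨h3.1.trans hsg, h3.2⟩, h4⟩
      · rintro ⟨h3, h4⟩; exact ⟨⟨hsub _ h3.2 (by omega) h4, h3.2⟩, h4⟩
  intro R hR
  rw [hKs R hR, hKs _ (Finset.Subset.refl _)]
  exact key R hR

end PartFam

section Count

variable {V : Type} [DecidableEq V] {F : PartFam V} {k : ℕ} {a : ℕ → ℕ}

namespace PartFam

theorem IsFamily.card_polyCliques_two (hF : F.IsFamily k a) {K : Finset V}
    (hK : K ∈ F.cross 2) :
    ∏ v ∈ K, (F.vClass v).card ≤ (F.polyCliques 2 K).card := by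
  obtain ⟨⟨hKg, hc⟩, hcr⟩ := mem_cross.1 hK
  obtain ⟨x, y, hxy, rfl⟩ := Finset.card_eq_two.1 hc
  have hx : x ∈ F.gnd := hKg (by simp)
  have hy : y ∈ F.gnd := hKg (by simp)
  have hne := hcr x (by simp) y (by simp) hxy
  rw [Finset.prod_pair hxy, ← Finset.card_product]
  have hcl : ∀ p ∈ F.vClass x ×ˢ F.vClass y, p.1 ∈ F.gnd ∧ p.2 ∈ F.gnd ∧
      F.vClass p.1 = F.vClass x ∧ F.vClass p.2 = F.vClass y := by
    rintro ⟨u, v⟩ h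
    rw [Finset.mem_product] at h
    have hu := hF.vClass_subset hx h.1
    have hv := hF.vClass_subset hy h.2
    exact ⟨hu, hv, (hF.mem_vClass_iff hu hx).1 h.1, (hF.mem_vClass_iff hv hy).1 h.2⟩
  refine Finset.card_le_card_of_injOn (fun p => {p.1, p.2}) ?_ ?_
  · rintro ⟨u, v⟩ h
    obtain ⟨hu, hv, hux, hvy⟩ := hcl _ h
    dsimp only at hu hv hux hvy
    have huv : F.vClass u ≠ F.vClass v := by rwa [hux, hvy]
    have huv' : u ≠ v := fun h => huv (h ▸ rfl)
    rw [Finset.mem_coe, mem_polyCliques (i := 1), if_pos rfl]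
    refine ⟨mem_cross.2 ⟨⟨?_, Finset.card_pair huv'⟩, ?_⟩, ?_⟩
    · intro w hw
      simp only [Finset.mem_insert, Finset.mem_singleton] at hw
      rcases hw with rfl | rfl <;> assumption
    · intro w hw w' hw' hww
      simp only [Finset.mem_insert, Finset.mem_singleton] at hw hw'
      rcases hw with rfl | rfl <;> rcases hw' with rfl | rfl
      · exact absurd rfl hww
      · exact huv
      · exact huv.symm
      · exact absurd rfl hww
    · intro T hT
      have h' := Finset.mem_product.1 h
      simp only [Finset.powersetCard_one, Finset.map_insert, Finset.map_singleton,
        Finset.mem_insert, Finset.mem_singleton, Function.Embedding.coeFn_mk] at hT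
      rcases hT with rfl | rfl
      · exact singleton_mem_polyad_one.2 ⟨x, by simp, h'.1⟩
      · exact singleton_mem_polyad_one.2 ⟨y, by simp, h'.2⟩
  · rintro ⟨u, v⟩ h ⟨u', v'⟩ h' heq
    obtain ⟨-, -, hux, hvy⟩ := hcl _ h
    obtain ⟨-, -, hux', hvy'⟩ := hcl _ h'
    dsimp only at hux hvy hux' hvy' heq
    have h1 : u ∈ ({u', v'} : Finset V) := heq ▸ by simp
    have h2 : v ∈ ({u', v'} : Finset V) := heq ▸ by simp
    simp only [Finset.mem_insert, Finset.mem_singleton] at h1 h2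
    rcases h1 with rfl | rfl
    · rcases h2 with rfl | rfl
      · exact absurd (hux.symm.trans hvy) hne
      · rfl
    · exact absurd (hux.symm.trans hvy') hne

theorem IsFamily.card_polyCliques_ge (hF : F.IsFamily k a) (h2k : 2 ≤ k) {ε : ℝ}
    (hreg : F.PolyadReg k a ε) {eCL : ℝ → ℝ → ℕ → ℕ → ℝ} {mCL : ℝ → ℝ → ℕ → ℕ → ℕ}
    (hCL : CountingProp eCL mCL) {t : ℕ} (ht : 2 ≤ t)
    (ha : ∀ j, 1 ≤ j → j ≤ k - 1 → 1 ≤ a j ∧ a j ≤ t)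
    (hε : 0 < ε) (hεt : 3 ≤ k → ε ≤ eCL (1 / (t : ℝ)) (1 / (t : ℝ)) (k - 1) k)
    {m : ℕ} (hm : mCL (1 / (t : ℝ)) (1 / (t : ℝ)) (k - 1) k ≤ m) {lam : ℝ} (hl0 : 0 ≤ lam)
    (hl : lam < 1 / 4) (hcl : ∀ v ∈ F.gnd, |((F.vClass v).card : ℝ) - m| ≤ lam * m)
    {K : Finset V} (hK : K ∈ F.cross k) :
    1 / 2 * ((∏ j ∈ Finset.Icc 2 (k - 1), (1 / (a j : ℝ)) ^ (k.choose j)) *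
      ∏ v ∈ K, ((F.vClass v).card : ℝ)) ≤ (F.polyCliques k K).card := by
  have hc := (mem_cross.1 hK).1.2
  have hKg := (mem_cross.1 hK).1.1
  have hprod : (0 : ℝ) ≤ ∏ v ∈ K, ((F.vClass v).card : ℝ) :=
    Finset.prod_nonneg fun _ _ => Nat.cast_nonneg _
  rcases h2k.eq_or_lt with rfl | h3
  · have := hF.card_polyCliques_two hK
    have h' : ∏ v ∈ K, ((F.vClass v).card : ℝ) ≤ ((F.polyCliques 2 K).card : ℝ) := by
      exact_mod_cast this
    simp only [show 2 - 1 = 1 from rfl, show Finset.Icc 2 1 = ∅ from rfl, Finset.prod_empty, one_mul]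
    linarith
  · have ht0 : (0 : ℝ) < t := by positivity
    obtain ⟨-, hcount⟩ := hCL (1 / (t : ℝ)) (1 / (t : ℝ)) (by positivity) (by positivity)
      (k - 1) k (by omega) (by omega)
    let e : Fin k → V := fun i => ((K.equivFinOfCardEq hc).symm i : V)
    have hinj : Function.Injective e := Subtype.val_injective.comp (Equiv.injective _)
    have he : Finset.univ.image e = K := by
      refine Finset.eq_of_subset_of_card_le ?_ ?_
      · intro v hv
        obtain ⟨i, -, rfl⟩ := Finset.mem_image.1 hv
        exact ((K.equivFinOfCardEq hc).symm i).2
      · rw [Finset.card_image_of_injective _ hinj]; simp [hc]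
    have heg : ∀ i, e i ∈ F.gnd := fun i => hKg (he ▸ by simp)
    have key := hcount V (F.cx K e) m lam ε (fun j => 1 / (a j : ℝ)) hl0 hl hε (hεt h3) hm
      (fun j hj hjk => by
        have := ha j (by omega) hjk
        have h1 : (1 : ℝ) ≤ a j := by exact_mod_cast this.1
        have h2 : (a j : ℝ) ≤ t := by exact_mod_cast this.2
        exact one_div_le_one_div_of_le (by linarith) h2)
      (hF.cx_isComplex hK he hinj) (fun i => hcl _ (heg i)) (hF.cx_isRegular hreg hK he hinj)
    have hpr : ∏ i, (((F.cx K e).C i).card : ℝ) = ∏ v ∈ K, ((F.vClass v).card : ℝ) := by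
      conv_rhs => rw [← he]
      rw [Finset.prod_image hinj.injOn]
      rfl
    rw [hpr] at key
    have hsub : Kset (F.cx K e).gnd (k - 1) k ((F.cx K e).G (k - 1)) ⊆ F.polyCliques k K := by
      have hk1 : k - 1 ≠ 1 := by omega
      intro S hS
      simp only [polyCliques, KsetC, if_neg hk1]
      simp only [Kset, Finset.mem_filter, Finset.mem_powersetCard, cx_gnd K he] at hS ⊢
      refine ⟨⟨hS.1.1.trans (Finset.sup_le fun v hv => hF.vClass_subset (hKg hv)), hS.1.2⟩, hS.2⟩
    have hle : ((Kset (F.cx K e).gnd (k - 1) k ((F.cx K e).G (k - 1))).card : ℝ) ≤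
        (F.polyCliques k K).card := by exact_mod_cast Finset.card_le_card hsub
    have hA : (0 : ℝ) ≤ (∏ j ∈ Finset.Icc 2 (k - 1), (1 / (a j : ℝ)) ^ (k.choose j)) *
        ∏ v ∈ K, ((F.vClass v).card : ℝ) :=
      mul_nonneg (Finset.prod_nonneg fun _ _ => by positivity) hprod
    have ht2 : 1 / (t : ℝ) ≤ 1 / 2 :=
      one_div_le_one_div_of_le (by norm_num) (by exact_mod_cast ht)
    have := (abs_le.1 key).1
    have := mul_le_mul_of_nonneg_right ht2 hA
    linarith

/-- A lower bound for all clique sets of polyads in terms of the number of vertices. -/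
theorem card_polyCliques_ge_pow {t : ℕ} (ht : 1 ≤ t)
    (ha : ∀ j, 1 ≤ j → j ≤ k - 1 → 1 ≤ a j ∧ a j ≤ t)
    (hsize : ∀ v ∈ F.gnd, (F.gnd.card : ℝ) / (2 * t) ≤ (F.vClass v).card)
    {K : Finset V} (hK : K ∈ F.cross k)
    (h : 1 / 2 * ((∏ j ∈ Finset.Icc 2 (k - 1), (1 / (a j : ℝ)) ^ (k.choose j)) *
      ∏ v ∈ K, ((F.vClass v).card : ℝ)) ≤ (F.polyCliques k K).card) :
    1 / 2 * (∏ j ∈ Finset.Icc 2 (k - 1), (1 / (t : ℝ)) ^ (k.choose j)) * (1 / (2 * t)) ^ k *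
      (F.gnd.card : ℝ) ^ k ≤ (F.polyCliques k K).card := by
  refine le_trans ?_ h
  have ht0 : (0 : ℝ) < t := by exact_mod_cast ht
  have hKg := (mem_cross.1 hK).1.1
  have h1 : (∏ j ∈ Finset.Icc 2 (k - 1), (1 / (t : ℝ)) ^ (k.choose j)) ≤
      ∏ j ∈ Finset.Icc 2 (k - 1), (1 / (a j : ℝ)) ^ (k.choose j) := by
    refine Finset.prod_le_prod (fun _ _ => by positivity) fun j hj => ?_
    rw [Finset.mem_Icc] at hj
    have := ha j (by omega) hj.2
    have h1 : (1 : ℝ) ≤ a j := by exact_mod_cast this.1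
    have h2 : (a j : ℝ) ≤ t := by exact_mod_cast this.2
    exact pow_le_pow_left₀ (by positivity) (one_div_le_one_div_of_le (by linarith) h2) _
  have h2 : ((F.gnd.card : ℝ) / (2 * t)) ^ k ≤ ∏ v ∈ K, ((F.vClass v).card : ℝ) := by
    rw [← (mem_cross.1 hK).1.2, ← Finset.prod_const]
    exact Finset.prod_le_prod (fun _ _ => by positivity) fun v hv => hsize v (hKg hv)
  have h3 : (1 / (2 * t) : ℝ) ^ k * (F.gnd.card : ℝ) ^ k = ((F.gnd.card : ℝ) / (2 * t)) ^ k := by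
    rw [← mul_pow]; congr 1; ring
  rw [mul_assoc, mul_assoc, h3]
  refine mul_le_mul_of_nonneg_left (mul_le_mul h1 h2 (by positivity) ?_) (by norm_num)
  exact Finset.prod_nonneg fun _ _ => by positivity

end PartFam

namespace LabFam

variable {P : LabFam V}

theorem IsLabeled.exists_cross_superset (hP : P.IsLabeled k a) {j : ℕ} {J : Finset V}
    (hJ : J ∈ P.toPartFam.cross j) (h1 : 1 ≤ j) (hjk : j ≤ k) :
    ∃ K ∈ P.toPartFam.cross k, J ⊆ K := by
  have hJm := PartFam.mem_cross.1 hJ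
  have hJinj : Set.InjOn P.vClass J := by
    intro u hu v hv h
    by_contra huv
    exact hJm.2 u hu v hv huv h
  obtain ⟨D, hD1, hD2, hD3⟩ := Finset.exists_subsuperset_card_eq (n := k)
    (Finset.image_subset_image (f := P.vClass) hJm.1.1)
    (by rw [Finset.card_image_of_injOn hJinj, hJm.1.2]; exact hjk)
    (by rw [hP.1.2.2.2.1]; exact hP.1.2.2.2.2.1)
  obtain ⟨v₀, -⟩ := Finset.card_pos.1 (by rw [hJm.1.2]; omega : 0 < J.card)
  have : Nonempty V := ⟨v₀⟩
  have hex : ∀ C ∈ D, ∃ v ∈ P.gnd, P.vClass v = C ∧ (C ∈ J.image P.vClass → v ∈ J) := by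
    intro C hC
    by_cases hCJ : C ∈ J.image P.vClass
    · obtain ⟨v, hv, rfl⟩ := Finset.mem_image.1 hCJ
      exact ⟨v, hJm.1.1 hv, rfl, fun _ => hv⟩
    · obtain ⟨v, hv, rfl⟩ := Finset.mem_image.1 (hD2 hC)
      exact ⟨v, hv, rfl, fun h => absurd h hCJ⟩
  choose! r hr1 hr2 hr3 using hex
  have hrinj : Set.InjOn r D := fun C hC C' hC' h => by
    rw [← hr2 C hC, ← hr2 C' hC', h]
  refine ⟨D.image r, PartFam.mem_cross.2 ⟨⟨?_, ?_⟩, ?_⟩, ?_⟩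
  · intro v hv
    obtain ⟨C, hC, rfl⟩ := Finset.mem_image.1 hv
    exact hr1 C hC
  · rw [Finset.card_image_of_injOn hrinj, hD3]
  · intro u hu v hv huv h
    obtain ⟨C, hC, rfl⟩ := Finset.mem_image.1 hu
    obtain ⟨C', hC', rfl⟩ := Finset.mem_image.1 hv
    rw [hr2 C hC, hr2 C' hC'] at h
    exact huv (h ▸ rfl)
  · intro v hv
    have hvD := hD1 (Finset.mem_image_of_mem P.vClass hv)
    refine Finset.mem_image.2 ⟨_, hvD, ?_⟩
    exact hJinj (hr3 _ hvD (Finset.mem_image_of_mem _ hv)) hv (hr2 _ hvD)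

/-- Each clique of the polyad of `K` contains a member of the class of a given `J ⊆ K`. -/
theorem IsLabeled.card_polyCliques_le (hP : P.IsLabeled k a) {j : ℕ} (h2 : 2 ≤ j) (hjk : j ≤ k - 1)
    {J K : Finset V} (hK : K ∈ P.toPartFam.cross k) (hJ : J ∈ K.powersetCard j) :
    (P.toPartFam.polyCliques k K).card ≤ (P.cls j J).card * P.gnd.card ^ (k - j) := by
  have hJm := Finset.mem_powersetCard.1 hJ
  obtain ⟨i, rfl⟩ : ∃ i, k = i + 1 := ⟨k - 1, by omega⟩
  have hJidx : (J.image P.vIdx).card = j := by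
    rw [Finset.card_image_of_injOn ((hP.vIdx_injOn hK).mono (Finset.coe_subset.2 hJm.1)), hJm.2]
  have hJsub : J.image P.vIdx ⊆ K.image P.vIdx := Finset.image_subset_image hJm.1
  have hJeq : (K.filter fun v => P.vIdx v ∈ J.image P.vIdx) = J := by
    symm
    refine Finset.eq_of_subset_of_card_le ?_ ?_
    · intro v hv
      exact Finset.mem_filter.2 ⟨hJm.1 hv, Finset.mem_image_of_mem _ hv⟩
    · rw [hP.card_filter_vIdx hK hJsub, hJidx, hJm.2]
  have hmem : ∀ S ∈ P.toPartFam.polyCliques (i + 1) K, S ∈ P.toPartFam.cross (i + 1) ∧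
      (S.filter fun v => P.vIdx v ∈ J.image P.vIdx) ∈ P.cls j J := by
    intro S hS
    have hSc := hP.1.polyCliques_subset_cross (by omega) (by omega) hK hS
    refine ⟨hSc, ?_⟩
    have himg := hP.image_vIdx_eq hK hSc fun T hT =>
      hP.1.polyCliques_down (by omega) hK hS le_rfl (by omega) hT
    have := hP.filter_mem_cls hK hSc himg hJsub (by omega) (by omega) fun T hT =>
      hP.1.polyCliques_down (by omega) hK hS (by omega) (by omega) hT
    rwa [hJidx, hJeq] at this
  calc (P.toPartFam.polyCliques (i + 1) K).card
      ≤ (P.cls j J ×ˢ P.gnd.powersetCard (i + 1 - j)).card := by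
        refine Finset.card_le_card_of_injOn (fun S =>
          (S.filter fun v => P.vIdx v ∈ J.image P.vIdx,
            S.filter fun v => P.vIdx v ∉ J.image P.vIdx)) ?_ ?_
        · intro S hS
          obtain ⟨hSc, hcl⟩ := hmem S hS
          refine Finset.mem_coe.2 (Finset.mem_product.2 ⟨hcl, Finset.mem_powersetCard.2
            ⟨(Finset.filter_subset _ _).trans (PartFam.mem_cross.1 hSc).1.1, ?_⟩⟩)
          have h1 := Finset.card_filter_add_card_filter_not (s := S)
            (fun v => P.vIdx v ∈ J.image P.vIdx)
          have h2 := (PartFam.mem_cross.1 (hP.1.cls_subset_cross h2 hjk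
            (PartFam.cross_of_subset hK hJ) hcl)).1.2
          have h3 := (PartFam.mem_cross.1 hSc).1.2
          dsimp only
          omega
        · intro S _ S' _ h
          simp only [Prod.mk.injEq] at h
          rw [← Finset.filter_union_filter_not_eq (fun v => P.vIdx v ∈ J.image P.vIdx) S,
            ← Finset.filter_union_filter_not_eq (fun v => P.vIdx v ∈ J.image P.vIdx) S', h.1, h.2]
    _ ≤ (P.cls j J).card * P.gnd.card ^ (i + 1 - j) := by
        rw [Finset.card_product, Finset.card_powersetCard]
        exact Nat.mul_le_mul_left _ (Nat.choose_le_pow _ _)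

theorem IsLabeled.card_cls_ge (hP : P.IsLabeled k a) {c : ℝ}
    (hn : 0 < P.gnd.card)
    (hc : ∀ K ∈ P.toPartFam.cross k,
      c * (P.gnd.card : ℝ) ^ k ≤ (P.toPartFam.polyCliques k K).card)
    {j : ℕ} (h2 : 2 ≤ j) (hjk : j ≤ k - 1) {J : Finset V} (hJ : J ∈ P.toPartFam.cross j) :
    c * (P.gnd.card : ℝ) ^ j ≤ (P.cls j J).card := by
  obtain ⟨K, hK, hJK⟩ := hP.exists_cross_superset hJ (by omega) (by omega)
  have h1 := hP.card_polyCliques_le h2 hjk hK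
    (Finset.mem_powersetCard.2 ⟨hJK, (PartFam.mem_cross.1 hJ).1.2⟩)
  have h2 : ((P.toPartFam.polyCliques k K).card : ℝ) ≤
      (P.cls j J).card * (P.gnd.card : ℝ) ^ (k - j) := by exact_mod_cast h1
  have hn' : (0 : ℝ) < (P.gnd.card : ℝ) ^ (k - j) := by positivity
  refine le_of_mul_le_mul_right ?_ hn'
  rw [mul_assoc, ← pow_add, show j + (k - j) = k by omega]
  exact (hc K hK).trans h2

theorem IsLabeled.card_polyCliques_ge (hP : P.IsLabeled k a) {c : ℝ}
    (hn : 0 < P.gnd.card)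
    (hc : ∀ K ∈ P.toPartFam.cross k,
      c * (P.gnd.card : ℝ) ^ k ≤ (P.toPartFam.polyCliques k K).card)
    {j : ℕ} (h2 : 2 ≤ j) (hjk : j ≤ k) {J : Finset V} (hJ : J ∈ P.toPartFam.cross j) :
    c * (P.gnd.card : ℝ) ^ j ≤ (P.toPartFam.polyCliques j J).card := by
  rcases hjk.eq_or_lt with rfl | hlt
  · exact hc J hJ
  · refine (hP.card_cls_ge hn hc h2 (by omega) hJ).trans ?_
    exact_mod_cast Finset.card_le_card (hP.1.cls_subset h2 (by omega) hJ)

end LabFam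

end Count

/-- The `j`-subsets of `W` whose image under `φ` lies in `B`. -/
noncomputable def pull (W : Finset V) (φ : V → V) (j : ℕ) (B : Finset (Finset V)) :
    Finset (Finset V) :=
  (W.powersetCard j).filter fun e => e.image φ ∈ B

theorem mem_pull {W : Finset V} {φ : V → V} {j : ℕ} {B : Finset (Finset V)} {e : Finset V} :
    e ∈ pull W φ j B ↔ (e ⊆ W ∧ e.card = j) ∧ e.image φ ∈ B := by
  simp [pull, Finset.mem_filter, Finset.mem_powersetCard]

theorem image_eq_self {φ : V → V} {e : Finset V} (h : ∀ v ∈ e, φ v = v) : e.image φ = e := by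
  rw [Finset.image_congr (g := id) fun v hv => h v hv, Finset.image_id]

theorem image_mem_powersetCard {φ : V → V} {e : Finset V} (he : Set.InjOn φ e) {j : ℕ}
    {T : Finset V} : T ∈ (e.image φ).powersetCard j ↔ ∃ S ∈ e.powersetCard j, S.image φ = T := by
  simp only [Finset.mem_powersetCard]
  constructor
  · rintro ⟨h1, rfl⟩
    obtain ⟨S, hS, rfl⟩ := Finset.subset_image_iff.1 h1
    exact ⟨S, ⟨hS, (Finset.card_image_of_injOn (he.mono hS)).symm⟩, rfl⟩
  · rintro ⟨S, ⟨hS, rfl⟩, rfl⟩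
    exact ⟨Finset.image_subset_image hS, Finset.card_image_of_injOn (he.mono hS)⟩

theorem injOn_of_mem_pull {W : Finset V} {φ : V → V} {j : ℕ} {B : Finset (Finset V)} {e : Finset V}
    (hB : ∀ T ∈ B, T.card = j) (he : e ∈ pull W φ j B) : Set.InjOn φ e := by
  obtain ⟨⟨-, hc⟩, h⟩ := mem_pull.1 he
  exact Finset.card_image_iff.1 ((hB _ h).trans hc.symm)

theorem KsetC_pull {W : Finset V} {φ : V → V} (hφ : ∀ v ∈ W, φ v ∈ W) {i : ℕ} (hi : 1 ≤ i)
    {cr B : Finset (Finset V)} (hcr : cr ⊆ W.powersetCard (i + 1)) (hB : ∀ T ∈ B, T.card = i) :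
    KsetC W (pull W φ (i + 1) cr) i (i + 1) (pull W φ i B) =
      pull W φ (i + 1) (KsetC W cr i (i + 1) B) := by
  have key : ∀ e : Finset V, e ⊆ W → Set.InjOn φ e →
      ((∀ T ∈ e.powersetCard i, T ∈ pull W φ i B) ↔ ∀ T ∈ (e.image φ).powersetCard i, T ∈ B) := by
    intro e heW hinj
    simp only [image_mem_powersetCard hinj, mem_pull, Finset.mem_powersetCard]
    constructor
    · rintro h T ⟨S, hS, rfl⟩
      exact (h S hS).2
    · intro h T hT
      exact ⟨⟨hT.1.trans heW, hT.2⟩, h _ ⟨T, hT, rfl⟩⟩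
  ext e
  rw [mem_pull, mem_KsetC, mem_KsetC]
  by_cases h1 : i = 1
  · simp only [if_pos h1]
    rw [mem_pull]
    have hinj : ∀ _ : (e ⊆ W ∧ e.card = i + 1) ∧ e.image φ ∈ cr, Set.InjOn φ e := fun h =>
      injOn_of_mem_pull (B := cr) (fun T hT => (Finset.mem_powersetCard.1 (hcr hT)).2)
        (mem_pull.2 h)
    constructor
    · rintro ⟨h, h'⟩
      exact ⟨h.1, h.2, (key e h.1.1 (hinj h)).1 h'⟩
    · rintro ⟨h, h', h''⟩
      exact ⟨⟨h, h'⟩, (key e h.1 (hinj ⟨h, h'⟩)).2 h''⟩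
  · simp only [if_neg h1]
    simp only [Finset.mem_powersetCard (n := i + 1)]
    constructor
    · rintro ⟨h, h'⟩
      have hinj : Set.InjOn φ e := by
        intro u hu v hv huv
        obtain ⟨T, hT, huT, hvT⟩ := exists_powersetCard_mem_of_pair (by omega) h.2 hu hv
        exact injOn_of_mem_pull hB (h' T hT) huT hvT huv
      refine ⟨h, ⟨?_, ?_⟩, (key e h.1 hinj).1 h'⟩
      · intro v hv
        obtain ⟨u, hu, rfl⟩ := Finset.mem_image.1 hv
        exact hφ u (h.1 hu)
      · rw [Finset.card_image_of_injOn hinj, h.2]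
    · rintro ⟨h, h', h''⟩
      exact ⟨h, (key e h.1 (Finset.card_image_iff.1 (h'.2.trans h.2.symm))).2 h''⟩

/-- The number of `(i+1)`-sets meeting a set of moved vertices. -/
theorem card_filter_moved_le (W : Finset V) (φ : V → V) (i : ℕ) :
    ((W.powersetCard (i + 1)).filter fun e => ¬ ∀ v ∈ e, φ v = v).card ≤
      (W.filter fun v => φ v ≠ v).card * W.card ^ i := by
  calc _ ≤ (((W.filter fun v => φ v ≠ v) ×ˢ W.powersetCard i).image
        fun p => insert p.1 p.2).card := by
        refine Finset.card_le_card fun e he => ?_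
        simp only [Finset.mem_filter, Finset.mem_powersetCard, not_forall] at he
        obtain ⟨⟨heW, hc⟩, v, hv, hne⟩ := he
        refine Finset.mem_image.2 ⟨(v, e.erase v), ?_, Finset.insert_erase hv⟩
        refine Finset.mem_product.2 ⟨Finset.mem_filter.2 ⟨heW hv, hne⟩, Finset.mem_powersetCard.2
          ⟨(Finset.erase_subset _ _).trans heW, ?_⟩⟩
        rw [Finset.card_erase_of_mem hv, hc, Nat.add_sub_cancel]
    _ ≤ _ := Finset.card_image_le
    _ ≤ _ := by
        rw [Finset.card_product, Finset.card_powersetCard]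
        exact Nat.mul_le_mul_left _ (Nat.choose_le_pow _ _)

/-- Regularity is preserved, with a slightly worse constant, when few vertices are moved. -/
theorem RegPairC.pull {W : Finset V} {φ : V → V} (hφ : ∀ v ∈ W, φ v ∈ W) {i : ℕ} (hi : 1 ≤ i)
    {cr A A' B : Finset (Finset V)} (hcr : cr ⊆ W.powersetCard (i + 1)) (hB : ∀ T ∈ B, T.card = i)
    (hA : ∀ e ⊆ W, e.card = i + 1 → (∀ v ∈ e, φ v = v) → (e ∈ A' ↔ e ∈ A))
    {ε δ d M : ℝ} (hε : 0 < ε) (hε1 : ε ≤ 1) (hδ : 0 < δ) (hδ1 : δ ≤ 1) (hd : 0 ≤ d) (hd1 : d ≤ 1)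
    (hM : (((W.powersetCard (i + 1)).filter fun e => ¬ ∀ v ∈ e, φ v = v).card : ℝ) ≤ M)
    (hlow : KsetC W cr i (i + 1) B = ∅ ∨
      3 * M ≤ δ * ε * ((KsetC W cr i (i + 1) B).card : ℝ))
    (h : RegPairC W cr i ε d A B) :
    RegPairC W (pull W φ (i + 1) cr) i (ε + δ) d A' (pull W φ i B) := by
  intro R hR hRlarge
  rw [KsetC_pull hφ hi hcr hB] at hRlarge
  set KB := KsetC W cr i (i + 1) B with hKB
  set KR := KsetC W (HypReg.pull W φ (i + 1) cr) i (i + 1) R with hKR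
  set N := (W.powersetCard (i + 1)).filter fun e => ¬ ∀ v ∈ e, φ v = v with hN
  have hsubpull : HypReg.pull W φ (i + 1) cr ⊆ W.powersetCard (i + 1) := Finset.filter_subset _ _
  have hKRsub : KR ⊆ HypReg.pull W φ (i + 1) KB := by
    rw [hKB, ← KsetC_pull hφ hi hcr hB]
    intro e he
    rw [hKR, mem_KsetC] at he
    exact mem_KsetC.2 ⟨he.1, fun T hT => hR (he.2 T hT)⟩
  rcases hlow with hemp | hlow
  · have : KR = ∅ := by
      rw [hemp] at hKRsub
      exact Finset.eq_empty_of_forall_notMem fun e he => by simpa using (mem_pull.1 (hKRsub he)).2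
    simp [this]
  let R₀ := R.filter fun e => ∀ v ∈ e, φ v = v
  have hR₀B : R₀ ⊆ B := by
    intro e he
    obtain ⟨he1, he2⟩ := Finset.mem_filter.1 he
    have := (mem_pull.1 (hR he1)).2
    rwa [image_eq_self he2] at this
  set K₀ := KsetC W cr i (i + 1) R₀ with hK₀
  have hfix : ∀ e : Finset V, e.card = i + 1 → (∀ T ∈ e.powersetCard i, T ∈ R₀) →
      ∀ v ∈ e, φ v = v := by
    intro e hc h v hv
    obtain ⟨T, hT, hvT⟩ := exists_powersetCard_mem hi (by omega : i ≤ e.card) hv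
    exact (Finset.mem_filter.1 (h T hT)).2 v hvT
  have hcard : ∀ cr' : Finset (Finset V), cr' ⊆ W.powersetCard (i + 1) →
      ∀ e ∈ (if i = 1 then cr' else W.powersetCard (i + 1)), e ⊆ W ∧ e.card = i + 1 := by
    intro cr' hcr' e he
    split_ifs at he
    · exact Finset.mem_powersetCard.1 (hcr' he)
    · exact Finset.mem_powersetCard.1 he
  have hK₀eq : KR \ N = K₀ := by
    ext e
    simp only [Finset.mem_sdiff, hKR, hN, hK₀, mem_KsetC, Finset.mem_filter, not_and, not_not]
    constructor
    · rintro ⟨⟨h1, h2⟩, h3⟩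
      have hec := hcard _ hsubpull e h1
      have hf := h3 (Finset.mem_powersetCard.2 hec)
      refine ⟨?_, fun T hT => Finset.mem_filter.2
        ⟨h2 T hT, fun v hv => hf v ((Finset.mem_powersetCard.1 hT).1 hv)⟩⟩
      split_ifs at h1 ⊢
      · have := (mem_pull.1 h1).2
        rwa [image_eq_self hf] at this
      · exact h1
    · rintro ⟨h1, h2⟩
      have hec := hcard _ hcr e h1
      have hf := hfix e hec.2 h2
      refine ⟨⟨?_, fun T hT => (Finset.mem_filter.1 (h2 T hT)).1⟩, fun _ => hf⟩
      split_ifs at h1 ⊢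
      · exact mem_pull.2 ⟨hec, by rwa [image_eq_self hf]⟩
      · exact h1
  have hAeq : (A' ∩ KR) \ N = A ∩ K₀ := by
    rw [← hK₀eq]
    ext e
    simp only [Finset.mem_sdiff, Finset.mem_inter]
    constructor
    · rintro ⟨⟨h1, h2⟩, h3⟩
      have hec := hcard _ hsubpull e (mem_KsetC.1 h2).1
      refine ⟨(hA e hec.1 hec.2 ?_).1 h1, h2, h3⟩
      simpa [hN, hec, Finset.mem_powersetCard] using h3
    · rintro ⟨h1, h2, h3⟩
      have hec := hcard _ hsubpull e (mem_KsetC.1 h2).1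
      refine ⟨⟨(hA e hec.1 hec.2 ?_).2 h1, h2⟩, h3⟩
      simpa [hN, hec, Finset.mem_powersetCard] using h3
  have hKBle : (KB.card : ℝ) ≤ (HypReg.pull W φ (i + 1) KB).card + M := by
    have hsub : KB ⊆ HypReg.pull W φ (i + 1) KB ∪ N := by
      intro e he
      have hec := hcard _ hcr e (mem_KsetC.1 he).1
      by_cases hf : ∀ v ∈ e, φ v = v
      · exact Finset.mem_union_left _ (mem_pull.2 ⟨hec, by rwa [image_eq_self hf]⟩)
      · exact Finset.mem_union_right _ (Finset.mem_filter.2 ⟨Finset.mem_powersetCard.2 hec, hf⟩)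
    have h1 := (Finset.card_le_card hsub).trans (Finset.card_union_le _ _)
    have h2 : (KB.card : ℝ) ≤ (HypReg.pull W φ (i + 1) KB).card + N.card := by exact_mod_cast h1
    linarith
  -- `y` sets of `KR` and `x` sets of `A' ∩ KR` meet the moved vertices
  have hy : (KR.card : ℝ) = K₀.card + (KR ∩ N).card := by
    rw [← hK₀eq]; exact_mod_cast (Finset.card_sdiff_add_card_inter KR N).symm
  have hx : ((A' ∩ KR).card : ℝ) = (A ∩ K₀).card + ((A' ∩ KR) ∩ N).card := by
    rw [← hAeq]; exact_mod_cast (Finset.card_sdiff_add_card_inter (A' ∩ KR) N).symm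
  have hyM : ((KR ∩ N).card : ℝ) ≤ M := le_trans
    (by exact_mod_cast Finset.card_le_card Finset.inter_subset_right) hM
  have hxy : (((A' ∩ KR) ∩ N).card : ℝ) ≤ (KR ∩ N).card := by
    exact_mod_cast Finset.card_le_card
      (Finset.inter_subset_inter_right Finset.inter_subset_right)
  have hx0 : (0 : ℝ) ≤ ((A' ∩ KR) ∩ N).card := Nat.cast_nonneg _
  have hK₀0 : (0 : ℝ) ≤ K₀.card := Nat.cast_nonneg _
  have hKB0 : (0 : ℝ) ≤ KB.card := Nat.cast_nonneg _
  have hM0 : 0 ≤ M := le_trans (Nat.cast_nonneg _) hM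
  generalize hyv : ((KR ∩ N).card : ℝ) = y at *
  generalize hxv : (((A' ∩ KR) ∩ N).card : ℝ) = x at *
  have hδKB : δ * ε * (KB.card : ℝ) ≤ δ * KB.card :=
    mul_le_mul_of_nonneg_right (by nlinarith) hKB0
  have hlarge : ε * (KB.card : ℝ) ≤ K₀.card := by
    have h1 : (ε + δ) * ((KB.card : ℝ) - M) ≤ KR.card :=
      (mul_le_mul_of_nonneg_left (by linarith) (by linarith)).trans hRlarge
    have h2 : (ε + δ) * M ≤ 2 * M := mul_le_mul_of_nonneg_right (by linarith) hM0
    linarith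
  have hreg := abs_le.1 (h R₀ hR₀B hlarge)
  rw [← hK₀] at hreg
  have hMK : M ≤ δ * KR.card := by
    have h1 : δ * (ε * (KB.card : ℝ)) ≤ δ * K₀.card := mul_le_mul_of_nonneg_left hlarge hδ.le
    have h2 : δ * (K₀.card : ℝ) ≤ δ * KR.card := mul_le_mul_of_nonneg_left (by linarith) hδ.le
    linarith
  have hεy : 0 ≤ ε * y := mul_nonneg hε.le (by linarith)
  have hdy0 : 0 ≤ d * y := mul_nonneg hd (by linarith)
  have hdy : d * y ≤ y := mul_le_of_le_one_left (by linarith) hd1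
  have e1 : d * (KR.card : ℝ) = d * K₀.card + d * y := by rw [hy]; ring
  have e2 : (ε + δ) * (KR.card : ℝ) = ε * K₀.card + ε * y + δ * KR.card := by
    rw [add_mul]; nth_rewrite 1 [hy]; ring
  rw [e1, e2, hx, abs_le]
  constructor <;> linarith

namespace LabFam

variable {P : LabFam V} {k : ℕ} {a : ℕ → ℕ} {φ : V → V}

/-- The pullback of a family of partitions along a map of the vertex set to itself. -/
noncomputable def pull (P : LabFam V) (φ : V → V) : LabFam V where
  gnd := P.gnd
  vClass v := P.gnd.filter fun u => φ u ∈ P.vClass (φ v)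
  cls j J := HypReg.pull P.gnd φ j (P.cls j (J.image φ))
  vIdx v := P.vIdx (φ v)
  lbl j I := P.lbl j (I.image φ)

theorem pull_gnd : (P.pull φ).gnd = P.gnd := rfl

theorem mem_pull_vClass {u v : V} :
    u ∈ (P.pull φ).vClass v ↔ u ∈ P.gnd ∧ φ u ∈ P.vClass (φ v) := by
  simp [pull, Finset.mem_filter]

theorem pull_cls (j : ℕ) (J : Finset V) :
    (P.pull φ).cls j J = HypReg.pull P.gnd φ j (P.cls j (J.image φ)) := rfl



theorem pull_vClass_eq_iff (hP : P.IsLabeled k a) (hφ : ∀ v ∈ P.gnd, φ v ∈ P.gnd)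
    {u v : V} (hu : u ∈ P.gnd) (hv : v ∈ P.gnd) :
    (P.pull φ).vClass u = (P.pull φ).vClass v ↔ P.vClass (φ u) = P.vClass (φ v) := by
  constructor
  · intro h
    have : u ∈ (P.pull φ).vClass v := by
      rw [← h, mem_pull_vClass]
      exact ⟨hu, hP.1.mem_vClass (hφ u hu)⟩
    exact (hP.1.mem_vClass_iff (hφ u hu) (hφ v hv)).1 (mem_pull_vClass.1 this).2
  · intro h
    ext w
    rw [mem_pull_vClass, mem_pull_vClass, h]

theorem pull_cross (hP : P.IsLabeled k a) (hφ : ∀ v ∈ P.gnd, φ v ∈ P.gnd) (j : ℕ) :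
    (P.pull φ).toPartFam.cross j = HypReg.pull P.gnd φ j (P.toPartFam.cross j) := by
  ext S
  rw [mem_pull, PartFam.mem_cross, PartFam.mem_cross, pull_gnd]
  constructor
  · rintro ⟨h1, h2⟩
    have hcl : ∀ u ∈ S, ∀ v ∈ S, u ≠ v → P.vClass (φ u) ≠ P.vClass (φ v) := fun u hu v hv huv h =>
      h2 u hu v hv huv ((pull_vClass_eq_iff hP hφ (h1.1 hu) (h1.1 hv)).2 h)
    have hinj : Set.InjOn φ S := by
      intro u hu v hv huv
      by_contra hne
      exact hcl u hu v hv hne (huv ▸ rfl)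
    refine ⟨h1, ⟨?_, ?_⟩, ?_⟩
    · intro v hv
      obtain ⟨u, hu, rfl⟩ := Finset.mem_image.1 hv
      exact hφ u (h1.1 hu)
    · rw [Finset.card_image_of_injOn hinj, h1.2]
    · intro u hu v hv huv
      obtain ⟨x, hx, rfl⟩ := Finset.mem_image.1 hu
      obtain ⟨y, hy, rfl⟩ := Finset.mem_image.1 hv
      exact hcl x hx y hy fun h => huv (h ▸ rfl)
  · rintro ⟨h1, h2, h3⟩
    refine ⟨h1, fun u hu v hv huv h => ?_⟩
    have hinj : Set.InjOn φ S := Finset.card_image_iff.1 (h2.2.trans h1.2.symm)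
    exact h3 _ (Finset.mem_image_of_mem _ hu) _ (Finset.mem_image_of_mem _ hv)
      (fun h' => huv (hinj hu hv h')) ((pull_vClass_eq_iff hP hφ (h1.1 hu) (h1.1 hv)).1 h)

theorem injOn_of_mem_pull_cross (hP : P.IsLabeled k a) (hφ : ∀ v ∈ P.gnd, φ v ∈ P.gnd) {j : ℕ}
    {J : Finset V} (hJ : J ∈ (P.pull φ).toPartFam.cross j) : Set.InjOn φ J := by
  rw [pull_cross hP hφ] at hJ
  exact injOn_of_mem_pull (fun T hT => (PartFam.mem_cross.1 hT).1.2) hJ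

theorem image_mem_cross (hP : P.IsLabeled k a) (hφ : ∀ v ∈ P.gnd, φ v ∈ P.gnd) {j : ℕ}
    {J : Finset V} (hJ : J ∈ (P.pull φ).toPartFam.cross j) :
    J.image φ ∈ P.toPartFam.cross j := by
  rw [pull_cross hP hφ] at hJ
  exact (mem_pull.1 hJ).2

theorem pull_polyad (hP : P.IsLabeled k a) (hφ : ∀ v ∈ P.gnd, φ v ∈ P.gnd) {i j : ℕ} (h1 : 1 ≤ j)
    {J : Finset V} (hJ : J ∈ (P.pull φ).toPartFam.cross i) :
    (P.pull φ).toPartFam.polyad j J =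
      HypReg.pull P.gnd φ j (P.toPartFam.polyad j (J.image φ)) := by
  ext T
  rw [mem_pull]
  rcases h1.eq_or_lt with rfl | h2
  · constructor
    · intro hT
      obtain ⟨u, hu, v, hv, rfl⟩ := PartFam.mem_polyad_one.1 hT
      obtain ⟨hvg, hv⟩ := mem_pull_vClass.1 hv
      refine ⟨⟨by simpa using hvg, by simp⟩, ?_⟩
      rw [Finset.image_singleton, PartFam.singleton_mem_polyad_one]
      exact ⟨φ u, Finset.mem_image_of_mem _ hu, hv⟩
    · rintro ⟨⟨h1, h2⟩, h3⟩
      obtain ⟨v, rfl⟩ := Finset.card_eq_one.1 h2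
      rw [Finset.image_singleton, PartFam.singleton_mem_polyad_one] at h3
      obtain ⟨w, hw, hvw⟩ := h3
      obtain ⟨u, hu, rfl⟩ := Finset.mem_image.1 hw
      exact PartFam.singleton_mem_polyad_one.2
        ⟨u, hu, mem_pull_vClass.2 ⟨by simpa using h1, hvw⟩⟩
  · rw [PartFam.mem_polyad h2, PartFam.mem_polyad h2]
    simp only [image_mem_powersetCard (injOn_of_mem_pull_cross hP hφ hJ), pull_cls, mem_pull]
    constructor
    · rintro ⟨S, hS, hT, hTS⟩
      exact ⟨hT, _, ⟨S, hS, rfl⟩, hTS⟩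
    · rintro ⟨hT, _, ⟨S, hS, rfl⟩, hTS⟩
      exact ⟨S, hS, hT, hTS⟩

theorem pull_polyCliques (hP : P.IsLabeled k a) (hφ : ∀ v ∈ P.gnd, φ v ∈ P.gnd) {m i : ℕ}
    (h1 : 1 ≤ i) (hk : i ≤ k - 1) {J : Finset V} (hJ : J ∈ (P.pull φ).toPartFam.cross m) :
    (P.pull φ).toPartFam.polyCliques (i + 1) J =
      HypReg.pull P.gnd φ (i + 1) (P.toPartFam.polyCliques (i + 1) (J.image φ)) := by
  simp only [PartFam.polyCliques, Nat.add_sub_cancel, pull_polyad hP hφ h1 hJ, pull_gnd]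
  rw [pull_cross hP hφ]
  exact KsetC_pull hφ h1 PartFam.cross_subset fun T hT => (PartFam.mem_cross.1
    (hP.1.polyad_subset_cross h1 hk (image_mem_cross hP hφ hJ) hT)).1.2

theorem pull_cls_eq_iff (hP : P.IsLabeled k a) (hφ : ∀ v ∈ P.gnd, φ v ∈ P.gnd) {j : ℕ}
    (h2 : 2 ≤ j) (hk : j ≤ k - 1) {I J : Finset V}
    (hI : I ∈ (P.pull φ).toPartFam.cross j) (hJ : J ∈ (P.pull φ).toPartFam.cross j) :
    (P.pull φ).cls j I = (P.pull φ).cls j J ↔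
      P.cls j (I.image φ) = P.cls j (J.image φ) := by
  constructor
  · intro h
    have hI' : I ∈ (P.pull φ).cls j I :=
      mem_pull.2 ⟨(PartFam.mem_cross.1 hI).1,
        hP.1.mem_cls_self h2 hk (image_mem_cross hP hφ hI)⟩
    rw [h] at hI'
    exact hP.1.cls_eq h2 hk (image_mem_cross hP hφ hJ) (mem_pull.1 hI').2
  · intro h
    rw [pull_cls, pull_cls, h]

theorem pull_isLabeled (hP : P.IsLabeled k a) (hφ : ∀ v ∈ P.gnd, φ v ∈ P.gnd)
    (hφφ : ∀ v ∈ P.gnd, φ (φ v) = φ v)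
    (hv : ∀ v ∈ P.gnd, ∃ u ∈ P.vClass v, φ u = u)
    (hcls : ∀ j, 2 ≤ j → j ≤ k - 1 → ∀ J ∈ P.toPartFam.cross j,
      ∃ I ∈ P.cls j J, ∀ v ∈ I, φ v = v) : (P.pull φ).IsLabeled k a := by
  refine ⟨⟨?_, ?_, ?_, ?_, hP.1.2.2.2.2.1, fun j h2 hk => ?_⟩, ?_, ?_, fun j h2 hk => ⟨?_, ?_, ?_⟩⟩
  · intro v hv
    exact mem_pull_vClass.2 ⟨hv, hP.1.mem_vClass (hφ v hv)⟩
  · exact fun v _ => Finset.filter_subset _ _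
  · intro u hu v hv h
    exact (pull_vClass_eq_iff hP hφ hu hv).2
      ((hP.1.mem_vClass_iff (hφ u hu) (hφ v hv)).1 (mem_pull_vClass.1 h).2)
  · refine (card_image_eq_card_image P.gnd (P.pull φ).vClass (fun v => P.vClass (φ v))
      fun u hu v hv => pull_vClass_eq_iff hP hφ hu hv).trans ?_
    rw [← hP.1.2.2.2.1]
    congr 1
    ext C
    simp only [Finset.mem_image]
    constructor
    · rintro ⟨v, hv, rfl⟩
      exact ⟨φ v, hφ v hv, rfl⟩
    · rintro ⟨v, hvg, rfl⟩
      obtain ⟨u, hu, huf⟩ := hv v hvg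
      have hug := hP.1.vClass_subset hvg hu
      exact ⟨u, hug, by rw [huf]; exact (hP.1.mem_vClass_iff hug hvg).1 hu⟩
  · obtain ⟨i, rfl⟩ : ∃ i, j = i + 1 := ⟨j - 1, by omega⟩
    refine ⟨?_, ?_, ?_, ?_, ?_⟩
    · intro J hJ
      exact mem_pull.2 ⟨(PartFam.mem_cross.1 hJ).1,
        hP.1.mem_cls_self h2 hk (image_mem_cross hP hφ hJ)⟩
    · intro J hJ I hI
      rw [pull_cls, pull_cls, hP.1.cls_eq h2 hk (image_mem_cross hP hφ hJ) (mem_pull.1 hI).2]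
    · intro J hJ I hI
      rw [pull_polyCliques hP hφ (by omega) (by omega) hJ]
      rw [pull_cls, mem_pull] at hI
      exact mem_pull.2 ⟨hI.1, hP.1.cls_subset h2 hk (image_mem_cross hP hφ hJ) hI.2⟩
    · intro J hJ I hI
      rw [pull_polyCliques hP hφ (by omega) (by omega) hJ, mem_pull] at hI
      rw [pull_cross hP hφ]
      exact mem_pull.2 ⟨hI.1, hP.1.polyCliques_subset_cross (by omega) (by omega)
        (image_mem_cross hP hφ hJ) hI.2⟩
    · intro J hJ
      have hJ' := image_mem_cross hP hφ hJ
      rw [pull_polyCliques hP hφ (by omega) (by omega) hJ]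
      have hcr : ∀ I ∈ HypReg.pull P.gnd φ (i + 1) (P.toPartFam.polyCliques (i + 1) (J.image φ)),
          I ∈ (P.pull φ).toPartFam.cross (i + 1) := by
        intro I hI
        rw [mem_pull] at hI
        rw [pull_cross hP hφ]
        exact mem_pull.2 ⟨hI.1, hP.1.polyCliques_subset_cross (by omega) (by omega) hJ' hI.2⟩
      rw [card_image_eq_card_image _ _ (fun I => P.cls (i + 1) (I.image φ)) fun I hI I' hI' =>
        pull_cls_eq_iff hP hφ h2 hk (hcr I hI) (hcr I' hI'),
        ← (hP.1.2.2.2.2.2 (i + 1) h2 hk).2.2.2.2 _ hJ']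
      congr 1
      ext C
      simp only [Finset.mem_image]
      constructor
      · rintro ⟨I, hI, rfl⟩
        exact ⟨_, (mem_pull.1 hI).2, rfl⟩
      · rintro ⟨I, hI, rfl⟩
        have hIc := hP.1.polyCliques_subset_cross (by omega) (by omega) hJ' hI
        obtain ⟨I', hI', hf⟩ := hcls (i + 1) h2 hk I hIc
        refine ⟨I', mem_pull.2 ⟨(PartFam.mem_cross.1 (hP.1.cls_subset_cross h2 hk hIc hI')).1, ?_⟩,
          ?_⟩
        · rw [image_eq_self hf]
          exact hP.1.polyCliques_subset_polyCliques (by omega) (by omega) hJ' hI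
            (hP.1.cls_subset h2 hk hIc hI')
        · rw [image_eq_self hf]
          exact hP.1.cls_eq h2 hk hIc hI'
  · exact fun v hv => hP.2.1 _ (hφ v hv)
  · intro u hu v hv
    rw [pull_vClass_eq_iff hP hφ hu hv]
    exact hP.2.2.1 _ (hφ u hu) _ (hφ v hv)
  · exact fun I hI => (hP.2.2.2 j h2 hk).1 _ (image_mem_cross hP hφ hI)
  · intro I hI I' hI'
    exact (hP.2.2.2 j h2 hk).2.1 _ (image_mem_cross hP hφ hI) _ (mem_pull.1 hI').2
  · intro I hI I' hI' hpol hlbl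
    rw [pull_cls_eq_iff hP hφ h2 hk hI hI']
    have hIc := image_mem_cross hP hφ hI
    have hIc' := image_mem_cross hP hφ hI'
    refine (hP.2.2.2 j h2 hk).2.2 _ hIc _ hIc' ?_ hlbl
    rw [pull_polyad hP hφ (by omega) hI, pull_polyad hP hφ (by omega) hI'] at hpol
    have key : ∀ A B : Finset V, A ∈ (P.pull φ).toPartFam.cross j →
        B ∈ (P.pull φ).toPartFam.cross j →
        HypReg.pull P.gnd φ (j - 1) (P.toPartFam.polyad (j - 1) (A.image φ)) =
          HypReg.pull P.gnd φ (j - 1) (P.toPartFam.polyad (j - 1) (B.image φ)) →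
        P.toPartFam.polyad (j - 1) (A.image φ) ⊆ P.toPartFam.polyad (j - 1) (B.image φ) := by
      intro A B hA hB hAB
      have hA' := image_mem_cross hP hφ hA
      refine hP.1.polyad_subset_polyad (by omega) (by omega) hA' (image_mem_cross hP hφ hB)
        fun T hT => ?_
      have hfix : ∀ v ∈ T, φ v = v := by
        intro v hv
        obtain ⟨u, hu, rfl⟩ := Finset.mem_image.1 ((Finset.mem_powersetCard.1 hT).1 hv)
        exact hφφ u ((PartFam.mem_cross.1 hA).1.1 hu)
      have hTc := PartFam.cross_of_subset hA' hT
      have hmem : T ∈ HypReg.pull P.gnd φ (j - 1)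
          (P.toPartFam.polyad (j - 1) (A.image φ)) := by
        refine mem_pull.2 ⟨(PartFam.mem_cross.1 hTc).1, ?_⟩
        rw [image_eq_self hfix]
        exact hP.1.self_mem_polyad (by omega) (by omega) hA' hT
      rw [hAB] at hmem
      have := (mem_pull.1 hmem).2
      rwa [image_eq_self hfix] at this
    exact (key I I' hI hI' hpol).antisymm (key I' I hI' hI hpol.symm)

theorem pull_addrOf (j : ℕ) (L : Finset V) : (P.pull φ).addrOf j L = P.addrOf j (L.image φ) := by
  have h : L.image (P.pull φ).vIdx = (L.image φ).image P.vIdx := by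
    rw [Finset.image_image]; rfl
  unfold addrOf
  rw [h]
  refine Prod.ext rfl (funext fun M => ?_)
  dsimp only
  split_ifs
  · rw [Finset.filter_image]; rfl
  · rfl

theorem pull_polyAt (hP : P.IsLabeled k a) (hφ : ∀ v ∈ P.gnd, φ v ∈ P.gnd) {j : ℕ} (h1 : 1 ≤ j)
    (x : Addr) : (P.pull φ).polyAt j x = HypReg.pull P.gnd φ j (P.polyAt j x) := by
  ext T
  rw [mem_pull]
  by_cases hj : j = 1
  · subst hj
    simp only [polyAt, if_true, mem_sing, Finset.mem_filter]
    constructor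
    · rintro ⟨v, ⟨hv, hx⟩, rfl⟩
      exact ⟨⟨Finset.singleton_subset_iff.2 hv, by simp⟩, φ v, ⟨hφ v hv, hx⟩, by simp⟩
    · rintro ⟨⟨h1, h2⟩, w, ⟨hw, hx⟩, h3⟩
      obtain ⟨v, rfl⟩ := Finset.card_eq_one.1 h2
      rw [Finset.image_singleton, Finset.singleton_inj] at h3
      subst h3
      exact ⟨v, ⟨Finset.singleton_subset_iff.1 h1, hx⟩, rfl⟩
  · have hj2 : ¬ j ≤ 1 := by omega
    simp only [polyAt, if_neg hj, Finset.mem_sup, partAt, if_neg hj2, Finset.mem_filter,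
      pull_addrOf, pull_cross hP hφ, mem_pull]
    constructor
    · rintro ⟨B, hB, ⟨hT, hTc⟩, h3, h4⟩
      exact ⟨hT, B, hB, hTc, h3, h4⟩
    · rintro ⟨hT, B, hB, hTc, h3, h4⟩
      exact ⟨B, hB, ⟨hT, hTc⟩, h3, h4⟩

theorem polyAt_subset (P : LabFam V) {j : ℕ} (x : Addr) :
    P.polyAt j x ⊆ P.gnd.powersetCard j := by
  intro T hT
  rw [Finset.mem_powersetCard]
  by_cases hj : j = 1
  · subst hj
    simp only [polyAt, if_true, mem_sing, Finset.mem_filter] at hT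
    obtain ⟨v, ⟨hv, -⟩, rfl⟩ := hT
    exact ⟨by simpa using hv, by simp⟩
  · simp only [polyAt, if_neg hj, Finset.mem_sup] at hT
    obtain ⟨B, hB, hT⟩ := hT
    unfold partAt at hT
    split_ifs at hT with h1 h2
    · obtain ⟨v, hv, rfl⟩ := mem_sing.1 hT
      obtain rfl : j = 0 := by omega
      rw [Finset.mem_powersetCard, Finset.card_eq_zero] at hB
      rw [hB.2] at h2
      simp [restrictA] at h2
    · simp at hT
    · exact (PartFam.mem_cross.1 (Finset.mem_filter.1 hT).1).1


/-- Moving few vertices turns a family with enough cliques in each polyad into a family of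
partitions which satisfies the same regularity conditions with slightly worse constants. -/
theorem pull_polyadReg (hP : P.IsLabeled k a) (hφ : ∀ v ∈ P.gnd, φ v ∈ P.gnd) {ε δ c : ℝ}
    (hε : 0 < ε) (hε1 : ε ≤ 1) (hδ : 0 < δ) (hδ1 : δ ≤ 1) {ν : ℝ}
    (hν : ((P.gnd.filter fun v => φ v ≠ v).card : ℝ) ≤ ν * P.gnd.card)
    (hνc : 3 * ν ≤ δ * ε * c) (ha : ∀ j, 1 ≤ j → j ≤ k - 1 → 1 ≤ a j)
    (hc : ∀ j, 2 ≤ j → j ≤ k → ∀ J ∈ P.toPartFam.cross j,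
      c * (P.gnd.card : ℝ) ^ j ≤ (P.toPartFam.polyCliques j J).card)
    (hreg : P.toPartFam.PolyadReg k a ε) :
    (P.pull φ).toPartFam.PolyadReg k a (ε + δ) := by
  intro K hK j h2 hk J hJ
  obtain ⟨i, rfl⟩ : ∃ i, j = i + 1 := ⟨j - 1, by omega⟩
  have hJc := PartFam.cross_of_subset hK hJ
  have hJ' := image_mem_cross hP hφ hJc
  have hK' := image_mem_cross hP hφ hK
  have hJK : J.image φ ∈ (K.image φ).powersetCard (i + 1) :=
    (image_mem_powersetCard (injOn_of_mem_pull_cross hP hφ hK)).2 ⟨J, hJ, rfl⟩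
  have key := hreg _ hK' (i + 1) h2 hk _ hJK
  have hpol := hP.1.polyad_subset_cross (j := i) (by omega) (by omega) hJ'
  have haj : (1 : ℝ) ≤ a (i + 1) := by exact_mod_cast ha (i + 1) (by omega) hk
  simp only [Nat.add_sub_cancel] at key ⊢
  rw [pull_polyad hP hφ (by omega) hJc, pull_polyad hP hφ (by omega) hK, pull_cross hP hφ, pull_gnd]
  refine RegPairC.pull hφ (by omega) PartFam.cross_subset
    (fun T hT => (PartFam.mem_cross.1 (hpol hT)).1.2) ?_ hε hε1 hδ hδ1
    (by positivity) ?_ (M := ν * (P.gnd.card : ℝ) ^ (i + 1)) ?_ (Or.inr ?_) key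
  · intro e he hec hf
    rw [mem_pull, image_eq_self hf]
    exact ⟨fun h => h.2, fun h => ⟨⟨he, hec⟩, h⟩⟩
  · exact (div_le_one (by linarith)).2 haj
  · have h1 : (((P.gnd.powersetCard (i + 1)).filter fun e => ¬ ∀ v ∈ e, φ v = v).card : ℝ) ≤
        ((P.gnd.filter fun v => φ v ≠ v).card : ℝ) * (P.gnd.card : ℝ) ^ i := by
      exact_mod_cast card_filter_moved_le P.gnd φ i
    refine h1.trans ((mul_le_mul_of_nonneg_right hν (by positivity)).trans (le_of_eq ?_))
    ring
  · have h1 := hc (i + 1) h2 (by omega) _ hJ'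
    simp only [PartFam.polyCliques, Nat.add_sub_cancel] at h1
    have h3 : (0 : ℝ) ≤ (P.gnd.card : ℝ) ^ (i + 1) := by positivity
    have h4 := mul_le_mul_of_nonneg_right hνc h3
    have h5 := mul_le_mul_of_nonneg_left h1 (mul_pos hδ hε).le
    linarith

theorem pull_isDensPartition (hP : P.IsLabeled k a) (h2k : 2 ≤ k)
    (hφ : ∀ v ∈ P.gnd, φ v ∈ P.gnd) {ε δ c : ℝ}
    (hε : 0 < ε) (hε1 : ε ≤ 1) (hδ : 0 < δ) (hδ1 : δ ≤ 1) {ν : ℝ}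
    (hν : ((P.gnd.filter fun v => φ v ≠ v).card : ℝ) ≤ ν * P.gnd.card)
    (hνc : 3 * ν ≤ δ * ε * c)
    (hc : ∀ K ∈ P.toPartFam.cross k,
      c * (P.gnd.card : ℝ) ^ k ≤ (P.toPartFam.polyCliques k K).card)
    {d : Addr → ℝ} (hd : DensityFun k a d) {H : Finset (Finset V)}
    (hH : P.IsDensPartition k a ε d H) :
    (P.pull φ).IsDensPartition k a (ε + δ) d H := by
  intro x hx
  obtain ⟨i, rfl⟩ : ∃ i, k = i + 1 := ⟨k - 1, by omega⟩
  have key := hH x hx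
  have hcard : ∀ T ∈ P.polyAt i x, T.card = i := fun T hT =>
    (Finset.mem_powersetCard.1 (polyAt_subset P x hT)).2
  simp only [Nat.add_sub_cancel] at key ⊢
  rw [pull_polyAt hP hφ (by omega), pull_cross hP hφ, pull_gnd]
  refine RegPairC.pull hφ (by omega) PartFam.cross_subset hcard
    (fun _ _ _ _ => Iff.rfl) hε hε1 hδ hδ1 (hd x hx).1 (hd x hx).2
    (M := ν * (P.gnd.card : ℝ) ^ (i + 1)) ?_ ?_ key
  · have h1 : (((P.gnd.powersetCard (i + 1)).filter fun e => ¬ ∀ v ∈ e, φ v = v).card : ℝ) ≤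
        ((P.gnd.filter fun v => φ v ≠ v).card : ℝ) * (P.gnd.card : ℝ) ^ i := by
      exact_mod_cast card_filter_moved_le P.gnd φ i
    refine h1.trans ((mul_le_mul_of_nonneg_right hν (by positivity)).trans (le_of_eq ?_))
    ring
  · rcases (KsetC P.gnd (P.toPartFam.cross (i + 1)) i (i + 1) (P.polyAt i x)).eq_empty_or_nonempty
      with hemp | ⟨K, hK⟩
    · exact Or.inl hemp
    · right
      rw [mem_KsetC] at hK
      have hKc : K ∈ P.toPartFam.cross (i + 1) := by
        have h1 := hK.1
        split_ifs at h1 with h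
        · exact h1
        · rw [Finset.mem_powersetCard] at h1
          refine PartFam.mem_cross.2 ⟨h1, fun u hu v hv huv => ?_⟩
          obtain ⟨T, hT, huT, hvT⟩ := exists_powersetCard_mem_of_pair (by omega) h1.2 hu hv
          have hTx := hK.2 T hT
          have hi1 : ¬ i ≤ 1 := by omega
          simp only [polyAt, if_neg h, Finset.mem_sup, partAt, if_neg hi1,
            Finset.mem_filter] at hTx
          obtain ⟨B, hB, hTc, -⟩ := hTx
          exact (PartFam.mem_cross.1 hTc).2 u huT v hvT huv
      have hsub := hP.polyad_subset_polyAt (by omega) (by omega) hKc hK.2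
      have hcl : P.toPartFam.polyCliques (i + 1) K ⊆
          KsetC P.gnd (P.toPartFam.cross (i + 1)) i (i + 1) (P.polyAt i x) := by
        intro S hS
        rw [PartFam.mem_polyCliques] at hS
        exact mem_KsetC.2 ⟨hS.1, fun T hT => hsub (hS.2 T hT)⟩
      have h1 := (hc K hKc).trans
        (by exact_mod_cast Finset.card_le_card hcl :
          ((P.toPartFam.polyCliques (i + 1) K).card : ℝ) ≤
            (KsetC P.gnd (P.toPartFam.cross (i + 1)) i (i + 1) (P.polyAt i x)).card)
      have h3 : (0 : ℝ) ≤ (P.gnd.card : ℝ) ^ (i + 1) := by positivity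
      have h4 := mul_le_mul_of_nonneg_right hνc h3
      have h5 := mul_le_mul_of_nonneg_left h1 (mul_pos hδ hε).le
      linarith

end LabFam

/-- A finite set can be split into labelled pieces of prescribed sizes. -/
theorem exists_labelling_of_sum_eq_card {V : Type*} [DecidableEq V] (I : Finset ℕ) (r : ℕ → ℕ) :
    ∀ L : Finset V, ∑ i ∈ I, r i = L.card →
      ∃ h : V → ℕ, (∀ v ∈ L, h v ∈ I) ∧ ∀ i ∈ I, (L.filter fun v => h v = i).card = r i := by
  induction I using Finset.induction_on with
  | empty =>
    intro L hL
    rw [Finset.sum_empty] at hL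
    rw [Finset.card_eq_zero.1 hL.symm]
    exact ⟨fun _ => 0, by simp, by simp⟩
  | insert x I hx ih =>
    intro L hL
    rw [Finset.sum_insert hx] at hL
    obtain ⟨S, hS, hSc⟩ := Finset.exists_subset_card_eq (s := L) (n := r x) (by omega)
    obtain ⟨h, h1, h2⟩ := ih (L \ S) (by rw [Finset.card_sdiff_of_subset hS]; omega)
    refine ⟨fun v => if v ∈ S then x else h v, ?_, ?_⟩
    · intro v hv
      by_cases hvS : v ∈ S
      · simp [hvS]
      · simp only [hvS, if_false]
        exact Finset.mem_insert_of_mem (h1 v (Finset.mem_sdiff.2 ⟨hv, hvS⟩))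
    · intro i hi
      rcases Finset.mem_insert.1 hi with rfl | hi
      · rw [← hSc]
        congr 1
        ext v
        rw [Finset.mem_filter]
        constructor
        · rintro ⟨hv, h⟩
          by_contra hvS
          simp only [hvS, if_false] at h
          exact hx (h ▸ h1 v (Finset.mem_sdiff.2 ⟨hv, hvS⟩))
        · exact fun hv => ⟨hS hv, if_pos hv⟩
      · rw [← h2 i hi]
        congr 1
        ext v
        simp only [Finset.mem_filter, Finset.mem_sdiff]
        by_cases hvS : v ∈ S
        · simp only [hvS, if_true, not_true_eq_false, and_false, false_and, iff_false, not_and]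
          rintro - rfl
          exact hx hi
        · simp [hvS]

/-- Vertices can be moved between classes so as to reach prescribed class sizes, each vertex
being sent to a vertex which is not moved itself. -/
theorem exists_resizing {V : Type*} [DecidableEq V] (W : Finset V) (g : V → ℕ) (I : Finset ℕ)
    (t : ℕ → ℕ) (ht : ∑ i ∈ I, t i = W.card) (ht1 : ∀ i ∈ I, 1 ≤ t i)
    (hs1 : ∀ i ∈ I, 1 ≤ (W.filter fun v => g v = i).card) :
    ∃ φ : V → V, (∀ v ∈ W, φ v ∈ W) ∧ (∀ v ∈ W, φ (φ v) = φ v) ∧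
      (∀ i ∈ I, (W.filter fun v => g (φ v) = i).card = t i) ∧
      (∀ i ∈ I, ∃ u ∈ W, g u = i ∧ φ u = u) ∧
      (W.filter fun v => φ v ≠ v).card ≤
        ∑ i ∈ I, (t i - (W.filter fun v => g v = i).card) := by
  set s : ℕ → ℕ := fun i => (W.filter fun v => g v = i).card with hs
  have hex : ∀ i, ∃ U ⊆ W.filter fun v => g v = i, U.card = min (s i) (t i) := fun i =>
    Finset.exists_subset_card_eq (min_le_left _ _)
  choose U hU hUc using hex
  have hrep : ∀ i ∈ I, ∃ u : V, u ∈ U i := fun i hi =>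
    Finset.card_pos.1 (by rw [hUc]; exact lt_min (hs1 i hi) (ht1 i hi))
  choose rep hrep using hrep
  have hUW : I.biUnion U ⊆ W := Finset.biUnion_subset.2 fun i _ v hv =>
    (Finset.mem_filter.1 (hU i hv)).1
  have hgU : ∀ i, ∀ v ∈ U i, g v = i := fun i v hv => (Finset.mem_filter.1 (hU i hv)).2
  have hUcard : (I.biUnion U).card = ∑ i ∈ I, min (s i) (t i) := by
    rw [Finset.card_biUnion]
    · exact Finset.sum_congr rfl fun i _ => hUc i
    · intro i _ j _ hij
      refine Finset.disjoint_left.2 fun v hv hv' => hij ?_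
      rw [← hgU i v hv, hgU j v hv']
  have hLcard : ∑ i ∈ I, (t i - s i) = (W \ I.biUnion U).card := by
    rw [Finset.card_sdiff_of_subset hUW, hUcard, ← ht]
    refine Nat.eq_sub_of_add_eq ?_
    rw [← Finset.sum_add_distrib]
    exact Finset.sum_congr rfl fun i _ => by omega
  obtain ⟨h, h1, h2⟩ := exists_labelling_of_sum_eq_card I (fun i => t i - s i) _ hLcard
  set φ : V → V := fun v =>
    if hv : v ∈ W \ I.biUnion U then rep (h v) (h1 v hv) else v with hφdef
  have hφL : ∀ v (hv : v ∈ W \ I.biUnion U), φ v = rep (h v) (h1 v hv) := fun v hv => dif_pos hv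
  have hφU : ∀ v ∈ I.biUnion U, φ v = v := fun v hv =>
    dif_neg fun hv' => (Finset.mem_sdiff.1 hv').2 hv
  have hφm : ∀ v ∈ W, φ v ∈ I.biUnion U := by
    intro v hv
    by_cases hvU : v ∈ I.biUnion U
    · rwa [hφU v hvU]
    · have hvL := Finset.mem_sdiff.2 ⟨hv, hvU⟩
      rw [hφL v hvL]
      exact Finset.mem_biUnion.2 ⟨_, h1 v hvL, hrep _ _⟩
  refine ⟨φ, fun v hv => hUW (hφm v hv), fun v hv => hφU _ (hφm v hv), fun i hi => ?_,
    fun i hi => ?_, ?_⟩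
  · have heq : (W.filter fun v => g (φ v) = i) =
        U i ∪ (W \ I.biUnion U).filter fun v => h v = i := by
      ext v
      rw [Finset.mem_filter, Finset.mem_union, Finset.mem_filter]
      constructor
      · rintro ⟨hv, hgv⟩
        by_cases hvU : v ∈ I.biUnion U
        · rw [hφU v hvU] at hgv
          obtain ⟨j, -, hj⟩ := Finset.mem_biUnion.1 hvU
          exact Or.inl (by rwa [← hgv, hgU j v hj])
        · have hvL := Finset.mem_sdiff.2 ⟨hv, hvU⟩
          rw [hφL v hvL, hgU _ _ (hrep _ _)] at hgv
          exact Or.inr ⟨hvL, hgv⟩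
      · rintro (hv | ⟨hv, hhv⟩)
        · have hvU := Finset.mem_biUnion.2 ⟨i, hi, hv⟩
          exact ⟨hUW hvU, by rw [hφU v hvU, hgU i v hv]⟩
        · exact ⟨(Finset.mem_sdiff.1 hv).1, by rw [hφL v hv, hgU _ _ (hrep _ _), hhv]⟩
    rw [heq, Finset.card_union_of_disjoint, hUc, h2 i hi]
    · omega
    · refine Finset.disjoint_left.2 fun v hv hv' => ?_
      exact (Finset.mem_sdiff.1 (Finset.mem_filter.1 hv').1).2 (Finset.mem_biUnion.2 ⟨i, hi, hv⟩)
  · have hu := Finset.mem_biUnion.2 ⟨i, hi, hrep i hi⟩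
    exact ⟨_, hUW hu, hgU i _ (hrep i hi), hφU _ hu⟩
  · rw [hLcard]
    refine Finset.card_le_card fun v hv => ?_
    rw [Finset.mem_filter] at hv
    exact Finset.mem_sdiff.2 ⟨hv.1, fun h => hv.2 (hφU v h)⟩

theorem sum_div_add_ite (n q : ℕ) (hq : 0 < q) :
    ∑ i ∈ Finset.Icc 1 q, (n / q + if i ≤ n % q then 1 else 0) = n := by
  have hlt := Nat.mod_lt n hq
  rw [Finset.sum_add_distrib, Finset.sum_const, Nat.card_Icc, Finset.sum_boole,
    show ((Finset.Icc 1 q).filter fun i => i ≤ n % q) = Finset.Icc 1 (n % q) by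
      ext i; simp only [Finset.mem_filter, Finset.mem_Icc]; omega, Nat.card_Icc]
  simpa using Nat.div_add_mod n q

namespace LabFam

variable {V : Type*} [DecidableEq V] {P : LabFam V} {k : ℕ} {a : ℕ → ℕ}

theorem IsLabeled.filter_vIdx (hP : P.IsLabeled k a) {v : V} (hv : v ∈ P.gnd) :
    (P.gnd.filter fun u => P.vIdx u = P.vIdx v) = P.vClass v := by
  ext u
  rw [Finset.mem_filter]
  constructor
  · rintro ⟨hu, h⟩
    exact (hP.1.mem_vClass_iff hu hv).2 ((hP.2.2.1 u hu v hv).1 h)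
  · intro h
    have hu := hP.1.vClass_subset hv h
    exact ⟨hu, (hP.2.2.1 u hu v hv).2 ((hP.1.mem_vClass_iff hu hv).1 h)⟩

theorem IsLabeled.exists_vIdx_eq (hP : P.IsLabeled k a) {i : ℕ} (hi : i ∈ Finset.Icc 1 (a 1)) :
    ∃ v ∈ P.gnd, P.vIdx v = i := by
  have hc : (P.gnd.image P.vIdx).card = a 1 :=
    (card_image_eq_card_image _ _ _ hP.2.2.1).trans hP.1.2.2.2.1
  have hsub : P.gnd.image P.vIdx ⊆ Finset.Icc 1 (a 1) := fun i hi => by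
    obtain ⟨v, hv, rfl⟩ := Finset.mem_image.1 hi
    exact Finset.mem_Icc.2 (hP.2.1 v hv)
  rw [← Finset.eq_of_subset_of_card_le hsub (by rw [hc, Nat.card_Icc]; omega)] at hi
  exact Finset.mem_image.1 hi

/-- Moving a small proportion of the vertices makes the vertex classes as equal as possible. -/
theorem IsLabeled.exists_equalizing (hP : P.IsLabeled k a) (ha : 1 ≤ a 1) {lam : ℝ} (hlam : lam < 1)
    (hn : (a 1 : ℝ) ≤ lam * P.gnd.card)
    (hsize : ∀ v ∈ P.gnd, |((P.vClass v).card : ℝ) - (P.gnd.card : ℝ) / (a 1 : ℝ)|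
      ≤ lam * (P.gnd.card : ℝ) / (a 1 : ℝ)) :
    ∃ φ : V → V, (∀ v ∈ P.gnd, φ v ∈ P.gnd) ∧ (∀ v ∈ P.gnd, φ (φ v) = φ v) ∧
      (∀ v ∈ P.gnd, ∃ u ∈ P.vClass v, φ u = u) ∧
      (∀ v ∈ P.gnd, ((P.pull φ).vClass v).card = P.gnd.card / a 1 ∨
        ((P.pull φ).vClass v).card = P.gnd.card / a 1 + 1) ∧
      ((P.gnd.filter fun v => φ v ≠ v).card : ℝ) ≤ 2 * lam * P.gnd.card := by
  have ha0 : (0 : ℝ) < a 1 := by exact_mod_cast ha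
  have hle : a 1 ≤ P.gnd.card := by
    have : (a 1 : ℝ) ≤ P.gnd.card := hn.trans (mul_le_of_le_one_left (Nat.cast_nonneg _) hlam.le)
    exact_mod_cast this
  have hs : ∀ i ∈ Finset.Icc 1 (a 1), ∃ v ∈ P.gnd, P.vIdx v = i ∧
      (P.gnd.filter fun u => P.vIdx u = i) = P.vClass v := fun i hi => by
    obtain ⟨v, hv, rfl⟩ := hP.exists_vIdx_eq hi
    exact ⟨v, hv, rfl, hP.filter_vIdx hv⟩
  obtain ⟨φ, h1, h2, h3, h4, h5⟩ := exists_resizing P.gnd P.vIdx (Finset.Icc 1 (a 1))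
    (fun i => P.gnd.card / a 1 + if i ≤ P.gnd.card % a 1 then 1 else 0)
    (sum_div_add_ite _ _ ha) (fun i _ => le_add_right (Nat.div_pos hle ha))
    (fun i hi => by
      obtain ⟨v, hv, -, h⟩ := hs i hi
      rw [h]
      exact Finset.card_pos.2 ⟨v, hP.1.mem_vClass hv⟩)
  refine ⟨φ, h1, h2, fun v hv => ?_, fun v hv => ?_, ?_⟩
  · obtain ⟨u, hu, huv, hφu⟩ := h4 _ (Finset.mem_Icc.2 (hP.2.1 v hv))
    refine ⟨u, ?_, hφu⟩
    rw [← hP.filter_vIdx hv]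
    exact Finset.mem_filter.2 ⟨hu, huv⟩
  · have h := h3 _ (Finset.mem_Icc.2 (hP.2.1 _ (h1 v hv)))
    have heq : (P.pull φ).vClass v = P.gnd.filter fun u => P.vIdx (φ u) = P.vIdx (φ v) := by
      ext u
      rw [mem_pull_vClass, Finset.mem_filter]
      refine and_congr_right fun hu => ?_
      rw [hP.1.mem_vClass_iff (h1 u hu) (h1 v hv), hP.2.2.1 _ (h1 u hu) _ (h1 v hv)]
    rw [heq, h]
    split_ifs <;> simp
  · have hterm : ∀ i ∈ Finset.Icc 1 (a 1),
        (((P.gnd.card / a 1 + if i ≤ P.gnd.card % a 1 then 1 else 0) -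
          (P.gnd.filter fun v => P.vIdx v = i).card : ℕ) : ℝ) ≤
            lam * P.gnd.card / a 1 + 1 := by
      intro i hi
      obtain ⟨v, hv, -, h⟩ := hs i hi
      rw [h]
      have hv' := (abs_le.1 (hsize v hv)).1
      have hdiv : ((P.gnd.card / a 1 : ℕ) : ℝ) ≤ P.gnd.card / a 1 := Nat.cast_div_le
      have hl0 : 0 ≤ lam * P.gnd.card / a 1 := div_nonneg (ha0.le.trans hn) ha0.le
      have hite : (((if i ≤ P.gnd.card % a 1 then 1 else 0 : ℕ)) : ℝ) ≤ 1 := by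
        split_ifs <;> simp
      rcases le_total (P.vClass v).card
        (P.gnd.card / a 1 + if i ≤ P.gnd.card % a 1 then 1 else 0) with hc | hc
      · rw [Nat.cast_sub hc]
        push_cast at hite ⊢
        linarith
      · rw [Nat.sub_eq_zero_of_le hc, Nat.cast_zero]
        linarith
    have h6 : ((P.gnd.filter fun v => φ v ≠ v).card : ℝ) ≤
        ∑ i ∈ Finset.Icc 1 (a 1), (lam * P.gnd.card / a 1 + 1) := by
      refine le_trans ?_ (Finset.sum_le_sum hterm)
      exact_mod_cast h5
    rw [Finset.sum_const, Nat.card_Icc, nsmul_eq_mul] at h6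
    have h7 : ((a 1 + 1 - 1 : ℕ) : ℝ) * (lam * P.gnd.card / a 1 + 1) =
        lam * P.gnd.card + a 1 := by
      rw [Nat.add_sub_cancel]
      field_simp
    linarith

/-- A family of partitions with enough cliques in every polyad can be made equitable, at the
expense of slightly worse regularity. -/
theorem IsLabeled.exists_isEquitPartition {V : Type} [DecidableEq V] {P : LabFam V}
    (hP : P.IsLabeled k a) (h2k : 2 ≤ k)
    (ha : ∀ j, 1 ≤ j → j ≤ k - 1 → 1 ≤ a j) {lam ε δ c : ℝ} (hlam : lam < 1)
    (hn : (a 1 : ℝ) ≤ lam * P.gnd.card) (hn0 : 0 < P.gnd.card)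
    (hε : 0 < ε) (hε1 : ε ≤ 1) (hδ : 0 < δ) (hδ1 : δ ≤ 1) (hc0 : 0 < c)
    (hlc : 6 * lam ≤ δ * ε * c)
    (hc : ∀ K ∈ P.toPartFam.cross k,
      c * (P.gnd.card : ℝ) ^ k ≤ (P.toPartFam.polyCliques k K).card)
    (heq : P.toPartFam.IsEquitable k a (1 / (a 1 : ℝ)) ε lam)
    {d : Addr → ℝ} (hd : DensityFun k a d) {H : Finset (Finset V)}
    (hH : P.IsDensPartition k a ε d H) :
    ∃ Q : LabFam V, Q.gnd = P.gnd ∧ Q.IsEquitPartition k a (ε + δ) d H := by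
  obtain ⟨φ, h1, h2, h3, h4, h5⟩ := hP.exists_equalizing (ha 1 le_rfl (by omega)) hlam hn heq.2.1
  have hn0' : (0 : ℝ) < P.gnd.card := by exact_mod_cast hn0
  have hεδ : δ * ε ≤ 1 := mul_le_one₀ hδ1 hε.le hε1
  have hcls : ∀ j, 2 ≤ j → j ≤ k - 1 → ∀ J ∈ P.toPartFam.cross j,
      ∃ I ∈ P.cls j J, ∀ v ∈ I, φ v = v := by
    intro j hj2 hjk J hJ
    by_contra hno
    push Not at hno
    obtain ⟨i, rfl⟩ : ∃ i, j = i + 1 := ⟨j - 1, by omega⟩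
    have hsub : P.cls (i + 1) J ⊆ (P.gnd.powersetCard (i + 1)).filter
        fun e => ¬ ∀ v ∈ e, φ v = v := by
      intro I hI
      refine Finset.mem_filter.2
        ⟨PartFam.cross_subset (hP.1.cls_subset_cross hj2 hjk hJ hI), fun h => ?_⟩
      obtain ⟨v, hv, hne⟩ := hno I hI
      exact hne (h v hv)
    have hb : ((P.cls (i + 1) J).card : ℝ) ≤
        (P.gnd.filter fun v => φ v ≠ v).card * (P.gnd.card : ℝ) ^ i := by
      exact_mod_cast (Finset.card_le_card hsub).trans (card_filter_moved_le P.gnd φ i)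
    have hge := hP.card_cls_ge hn0 hc hj2 hjk hJ
    have hpow : (0 : ℝ) < (P.gnd.card : ℝ) ^ (i + 1) := by positivity
    have hle : c * (P.gnd.card : ℝ) ^ (i + 1) ≤ 2 * lam * (P.gnd.card : ℝ) ^ (i + 1) := by
      refine hge.trans (hb.trans ((mul_le_mul_of_nonneg_right h5 (by positivity)).trans_eq ?_))
      ring
    have hcl : c ≤ 2 * lam := le_of_mul_le_mul_right hle hpow
    have : δ * ε * c ≤ c := mul_le_of_le_one_left hc0.le hεδ
    linarith
  have hc' : ∀ j, 2 ≤ j → j ≤ k → ∀ J ∈ P.toPartFam.cross j,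
      c * (P.gnd.card : ℝ) ^ j ≤ (P.toPartFam.polyCliques j J).card := fun j hj hjk J hJ =>
    hP.card_polyCliques_ge hn0 hc hj hjk hJ
  have hν : 3 * (2 * lam) ≤ δ * ε * c := by linarith
  exact ⟨P.pull φ, rfl, pull_isLabeled hP h1 h2 h3 hcls,
    ⟨heq.1, h4, pull_polyadReg hP h1 hε hε1 hδ hδ1 h5 hν ha hc' heq.2.2⟩,
    pull_isDensPartition hP h2k h1 hε hε1 hδ hδ1 h5 hν hc hd hH⟩

/-- In an equitable family of partitions every polyad of a crossing `k`-set has many cliques. -/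
theorem IsLabeled.card_polyCliques_ge_of_isEquitable {V : Type} [DecidableEq V] {P : LabFam V}
    (hP : P.IsLabeled k a) (h2k : 2 ≤ k) {eCL : ℝ → ℝ → ℕ → ℕ → ℝ} {mCL : ℝ → ℝ → ℕ → ℕ → ℕ}
    (hCL : CountingProp eCL mCL) {t T : ℕ} (ht : 2 ≤ t) (htT : t ≤ T)
    (ha : ∀ j, 1 ≤ j → j ≤ k - 1 → 1 ≤ a j ∧ a j ≤ t) {ε lam : ℝ} (hε : 0 < ε)
    (hεt : 3 ≤ k → ε ≤ eCL (1 / (t : ℝ)) (1 / (t : ℝ)) (k - 1) k)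
    (hlam : 0 < lam) (hlam' : lam ≤ 1 / 16) (hn : 17 * T ≤ P.gnd.card)
    (hm : T * mCL (1 / (t : ℝ)) (1 / (t : ℝ)) (k - 1) k ≤ P.gnd.card)
    (heq : P.toPartFam.IsEquitable k a (1 / (a 1 : ℝ)) ε lam)
    {K : Finset V} (hK : K ∈ P.toPartFam.cross k) :
    1 / 2 * (∏ j ∈ Finset.Icc 2 (k - 1), (1 / (T : ℝ)) ^ (k.choose j)) * (1 / (2 * T)) ^ k *
      (P.gnd.card : ℝ) ^ k ≤ (P.toPartFam.polyCliques k K).card := by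
  obtain ⟨ha1, ha1t⟩ := ha 1 le_rfl (by omega)
  have ha0 : (0 : ℝ) < a 1 := by exact_mod_cast ha1
  have haT : a 1 ≤ T := ha1t.trans htT
  have haT' : (a 1 : ℝ) ≤ T := by exact_mod_cast haT
  have hT0 : (0 : ℝ) < T := ha0.trans_le haT'
  set x : ℝ := (P.gnd.card : ℝ) / a 1 with hx
  have hTx : (P.gnd.card : ℝ) / T ≤ x :=
    div_le_div_of_nonneg_left (Nat.cast_nonneg _) ha0 haT'
  have hx17 : 17 ≤ x := by
    refine le_trans ?_ hTx
    rw [le_div_iff₀ hT0]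
    exact_mod_cast hn
  have hsize : ∀ v ∈ P.gnd, |((P.vClass v).card : ℝ) - x| ≤ lam * x := fun v hv => by
    have := heq.2.1 v hv
    rwa [mul_div_assoc] at this
  have hmx : ((P.gnd.card / a 1 : ℕ) : ℝ) ≤ x := Nat.cast_div_le
  have hxm : x < ((P.gnd.card / a 1 : ℕ) : ℝ) + 1 := by
    rw [hx, div_lt_iff₀ ha0]
    have := Nat.lt_div_mul_add (a := P.gnd.card) ha1
    have h2 : P.gnd.card < (P.gnd.card / a 1 + 1) * a 1 := by rw [add_mul, one_mul]; exact this
    exact_mod_cast h2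
  have hlx : lam * x ≤ 1 / 16 * x := mul_le_mul_of_nonneg_right hlam' (by linarith)
  refine PartFam.card_polyCliques_ge_pow (by omega)
    (fun j h1 h2 => ⟨(ha j h1 h2).1, (ha j h1 h2).2.trans htT⟩) (fun v hv => ?_) hK
    (hP.1.card_polyCliques_ge h2k heq.2.2 hCL ht ha hε hεt (m := P.gnd.card / a 1) ?_
      (lam := 3 / 16) (by norm_num) (by norm_num) (fun v hv => ?_) hK)
  · have h := (abs_le.1 (hsize v hv)).1
    have h2 : (P.gnd.card : ℝ) / (2 * T) = P.gnd.card / T / 2 := by rw [div_div, mul_comm]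
    linarith
  · rw [Nat.le_div_iff_mul_le ha1, mul_comm]
    exact (Nat.mul_le_mul_right _ haT).trans hm
  · have h := abs_le.1 (hsize v hv)
    rw [abs_le]
    constructor <;> linarith [h.1, h.2]

end LabFam

/-- The counting lemma applies with the regularity of a regularity instance. -/
theorem RegInstance.le_eCL {eRI : ℕ → ℕ → ℝ} {k : ℕ} {ε : ℝ} {a : ℕ → ℕ} {d : Addr → ℝ}
    (hR : RegInstance eRI k (ε / 3) a d) {eCL : ℝ → ℝ → ℕ → ℕ → ℝ} {mCL : ℝ → ℝ → ℕ → ℕ → ℕ}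
    (hCL : CountingProp eCL mCL)
    (hRI : ∀ t k : ℕ, 1 ≤ t → 2 ≤ k →
      eRI t k < eCL (1/(t:ℝ)) (1/(t:ℝ)) (k-1) k / (4 * (t:ℝ) ^ (4^k)))
    (ht : 1 ≤ maxA k a) (h3 : 3 ≤ k) :
    ε ≤ eCL (1 / (maxA k a : ℝ)) (1 / (maxA k a : ℝ)) (k - 1) k := by
  have ht1 : (1 : ℝ) ≤ maxA k a := by exact_mod_cast ht
  have hpos : 0 < 1 / (maxA k a : ℝ) := by positivity
  have he := (hCL _ _ hpos hpos (k - 1) k (by omega) (by omega)).1.1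
  have h1 := hRI (maxA k a) k ht hR.1
  have h2 : eCL (1 / (maxA k a : ℝ)) (1 / (maxA k a : ℝ)) (k - 1) k /
      (4 * (maxA k a : ℝ) ^ (4 ^ k)) ≤
        eCL (1 / (maxA k a : ℝ)) (1 / (maxA k a : ℝ)) (k - 1) k / 4 :=
    div_le_div_of_nonneg_left he.le (by norm_num) (by linarith [one_le_pow₀ (n := 4 ^ k) ht1])
  linarith [hR.2.2.2.1]

end Aux

/-- Lemma: an almost-equitable family of partitions can be replaced by a genuinely equitable
one with almost the same parameters. -/
theorem removing_lambda (eRI : ℕ → ℕ → ℝ) (hERI : GoodERI eRI) :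
    ∀ k : ℕ, 2 ≤ k → ∀ ε : ℝ, 0 < ε → ε ≤ 1 →
    ∃ lam₀ : ℝ, 0 < lam₀ ∧ ∀ lam : ℝ, 0 < lam → lam ≤ lam₀ →
    ∃ n₀ : ℕ, ∀ (V : Type) [DecidableEq V], ∀ (W : Finset V) (n : ℕ),
    W.card = n → n₀ ≤ n →
    ∀ (a : ℕ → ℕ) (d : Addr → ℝ), RegInstance eRI k (ε / 3) a d →
    ∀ Hk : Finset (Finset V), IsKGraph W k Hk →
    ∀ P : LabFam V, P.gnd = W → P.IsLabeled k a →
    P.toPartFam.IsEquitable k a (1 / (a 1 : ℝ)) ε lam →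
    P.IsDensPartition k a ε d Hk →
    ∃ Q : LabFam V, Q.gnd = W ∧
      Q.IsEquitPartition k a (ε + lam ^ ((1:ℝ)/10)) d Hk := by
  intro k h2k ε hε hε1
  obtain ⟨-, -, -, hlim, eCL, mCL, hCL, hRI⟩ := hERI
  obtain ⟨T, hT⟩ := Filter.eventually_atTop.1
    ((hlim k).eventually_lt_const (show (0 : ℝ) < ε / 3 by positivity))
  set c : ℝ := 1 / 2 * (∏ j ∈ Finset.Icc 2 (k - 1), (1 / ((T + 1 : ℕ) : ℝ)) ^ (k.choose j)) *
    (1 / (2 * (T + 1 : ℕ))) ^ k with hcdef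
  have hc0 : 0 < c := by
    have : (0 : ℝ) < (T + 1 : ℕ) := by exact_mod_cast T.succ_pos
    positivity
  refine ⟨min (1 / 16) ((ε * c / 6) ^ 2), by positivity, fun lam hlam hle => ?_⟩
  have hlam1 : lam ≤ 1 / 16 := hle.trans (min_le_left _ _)
  have hlamc : lam ≤ (ε * c / 6) ^ 2 := hle.trans (min_le_right _ _)
  refine ⟨max (max (17 * (T + 1)) ⌈((T + 1 : ℕ) : ℝ) / lam⌉₊)
    ((T + 1) * (Finset.range (T + 1)).sup fun t => mCL (1 / (t : ℝ)) (1 / (t : ℝ)) (k - 1) k), ?_⟩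
  rintro V _ W n hWn hn a d hR Hk - P rfl hP heq hH
  rw [← hWn, max_le_iff, max_le_iff] at hn
  obtain ⟨⟨hn1, hn2⟩, hn3⟩ := hn
  have htT : maxA k a < T := by
    by_contra! h
    exact absurd (hT _ h) (not_lt.2 hR.2.2.2.1)
  have ha : ∀ j, 1 ≤ j → j ≤ k - 1 → 1 ≤ a j ∧ a j ≤ maxA k a := fun j h1 h2 =>
    ⟨hR.2.1 j h1 h2, Finset.le_sup (f := a) (Finset.mem_Icc.2 ⟨h1, h2⟩)⟩
  have ha1 := ha 1 le_rfl (by omega)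
  have ht2 : 2 ≤ maxA k a := h2k.trans (hP.1.2.2.2.2.1.trans ha1.2)
  have hm : (T + 1) * mCL (1 / (maxA k a : ℝ)) (1 / (maxA k a : ℝ)) (k - 1) k ≤ P.gnd.card :=
    (Nat.mul_le_mul_left _ (Finset.le_sup
      (f := fun t : ℕ => mCL (1 / (t : ℝ)) (1 / (t : ℝ)) (k - 1) k)
      (Finset.mem_range.2 (by omega)))).trans hn3
  have hnl : (a 1 : ℝ) ≤ lam * P.gnd.card := by
    have h1 : ((T + 1 : ℕ) : ℝ) / lam ≤ P.gnd.card := Nat.ceil_le.1 hn2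
    rw [div_le_iff₀ hlam, mul_comm] at h1
    refine le_trans ?_ h1
    exact_mod_cast (show a 1 ≤ T + 1 by omega)
  have hδ1 : lam ^ ((1 : ℝ) / 10) ≤ 1 := Real.rpow_le_one hlam.le (by linarith) (by norm_num)
  have hlc : 6 * lam ≤ lam ^ ((1 : ℝ) / 10) * ε * c := by
    have h1 : lam = lam ^ ((1 : ℝ) / 10) * lam ^ ((9 : ℝ) / 10) := by
      rw [← Real.rpow_add hlam]; norm_num
    have h2 : lam ^ ((9 : ℝ) / 10) ≤ ε * c / 6 := by
      calc lam ^ ((9 : ℝ) / 10) ≤ lam ^ ((1 : ℝ) / 2) :=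
            Real.rpow_le_rpow_of_exponent_ge hlam (by linarith) (by norm_num)
        _ = √lam := (Real.sqrt_eq_rpow lam).symm
        _ ≤ ε * c / 6 := (Real.sqrt_le_left (by positivity)).2 hlamc
    have h3 := mul_le_mul_of_nonneg_left h2 (Real.rpow_nonneg hlam.le ((1 : ℝ) / 10))
    rw [← h1] at h3
    linarith
  exact hP.exists_isEquitPartition h2k hR.2.1 (by linarith) hnl (by omega) hε hε1
    (Real.rpow_pos_of_pos hlam _) hδ1 hc0 hlc
    (fun K hK => hP.card_polyCliques_ge_of_isEquitable h2k hCL ht2 (T := T + 1) (by omega) ha hε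
      (hR.le_eCL hCL hRI (by omega)) hlam hlam1 hn1 hm heq hK)
    heq hR.2.2.2.2 hH

end HypReg
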